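/- arXiv:2407.12685 — 9 statements merged into one kernel-verified Lean document; each statement's English description precedes it below -/
import Mathlib

section
/- Let n ≥ 1, let u : ℝⁿ → ℝ be of type (★) with index set 𝓘 and coefficients a_I, and fix i ∈ {1,…,n}. Set 𝓘̂ = {I ∈ 𝓘 : I_α = 0 for all α ≠ i}. Then: (a) for every j ≠ i, the iterated limit of ∂u/∂x_j(x) as x_α → −∞ for all α ≠ i equals −1; (b) the iterated limit of ∂u/∂x_i(x) as x_α → −∞ for all α ≠ i equals L_i(x_i) := (Σ_{I∈𝓘̂} a_I I_i e^{I_i x_i})/(Σ_{I∈𝓘̂} a_I e^{I_i x_i}) − 1; and (c) lim_{x_i→+∞} L_i(x_i) = max_{I∈𝓘̂} I_i − 1. -/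
/-!
Differentiating `u = log (∑ a_I e^{I·x}) − ∑ x_α` gives
`∂u/∂x_j = (∑ a_I I_j e^{I·x}) / (∑ a_I e^{I·x}) − 1` (`pderivAt_typeStar`).
When `x_i = t` is fixed and all other variables tend to `−∞`, the factor `e^{I·x}` is constantly
`e^{I_i t}` if `I` is supported on the `i`-th coordinate, and tends to `0` otherwise
(`tendsto_exp_slice`). Both sums are finite and the limit of the denominator is positive, since
`0 ∈ 𝓘`, so the limits in (a) and (b) are obtained termwise; in (a) the numerator tends to `0`
because `I_j = 0` on every surviving term.

For (c), multiply the numerator and the denominator of `L_i` by `e^{−mt}` with `m = max I_i`: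
only the terms with `I_i = m` survive as `t → +∞`, and the quotient tends to `m`
(`tendsto_ratio_atTop`).
-/

open Real Filter MeasureTheory

/-- The partial derivative of `u : ℝⁿ → ℝ` in the `i`-th coordinate direction. -/
noncomputable def pderivAt {n : ℕ} (u : (Fin n → ℝ) → ℝ) (i : Fin n) (x : Fin n → ℝ) : ℝ :=
  fderiv ℝ u x (Pi.single i 1)

/-- The gradient map `Du : ℝⁿ → ℝⁿ` of `u`. -/
noncomputable def gradMap {n : ℕ} (u : (Fin n → ℝ) → ℝ) (x : Fin n → ℝ) : Fin n → ℝ :=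
  fun i => pderivAt u i x

/-- The Hessian matrix `D²u` of `u` at `x`. -/
noncomputable def hessMat {n : ℕ} (u : (Fin n → ℝ) → ℝ) (x : Fin n → ℝ) :
    Matrix (Fin n) (Fin n) ℝ :=
  Matrix.of fun i j => pderivAt (pderivAt u j) i x

/-- `u` is of type (★) with index set `𝓘` and coefficients `a`:
`u x = log (∑_{I ∈ 𝓘} a_I e^{I·x}) − ∑ i, x i`, where `𝓘 ⊂ ℕⁿ` is finite, contains every
multi-index of length `≤ 1`, `a_I > 0` on `𝓘`, and `a_I = 1` whenever `|I| ≤ 1`. -/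
def IsTypeStar {n : ℕ} (u : (Fin n → ℝ) → ℝ) (𝓘 : Finset (Fin n → ℕ))
    (a : (Fin n → ℕ) → ℝ) : Prop :=
  (∀ I : Fin n → ℕ, (∑ i, I i) ≤ 1 → I ∈ 𝓘) ∧
  (∀ I ∈ 𝓘, 0 < a I) ∧
  (∀ I : Fin n → ℕ, (∑ i, I i) ≤ 1 → a I = 1) ∧
  ∀ x, u x = Real.log (∑ I ∈ 𝓘, a I * Real.exp (∑ i, (I i : ℝ) * x i)) - ∑ i, x i

/-- `u` satisfies the Monge–Ampère equation `det D²u = e^{−u}` on all of `ℝⁿ`. -/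
def SatisfiesMA {n : ℕ} (u : (Fin n → ℝ) → ℝ) : Prop :=
  ∀ x, (hessMat u x).det = Real.exp (-(u x))

/-- The logarithmic derivative formula for a function of type (★). -/
lemma pderivAt_typeStar {n : ℕ} {u : (Fin n → ℝ) → ℝ} {𝓘 : Finset (Fin n → ℕ)}
    {a : (Fin n → ℕ) → ℝ} (hu : IsTypeStar u 𝓘 a) (j : Fin n) (x : Fin n → ℝ) :
    pderivAt u j x =
      (∑ I ∈ 𝓘, a I * (I j : ℝ) * Real.exp (∑ α, (I α : ℝ) * x α)) /
        (∑ I ∈ 𝓘, a I * Real.exp (∑ α, (I α : ℝ) * x α)) - 1 := by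
  obtain ⟨hmem, hpos, -, hux⟩ := hu
  have hne : 𝓘.Nonempty := ⟨0, hmem 0 (by simp)⟩
  have hS : (∑ I ∈ 𝓘, a I * Real.exp (∑ α, (I α : ℝ) * x α)) ≠ 0 :=
    (Finset.sum_pos (fun I hI => mul_pos (hpos I hI) (Real.exp_pos _)) hne).ne'
  have hlin : ∀ I : Fin n → ℕ, HasFDerivAt (fun x : Fin n → ℝ => ∑ α, (I α : ℝ) * x α)
      (∑ α, (I α : ℝ) • (ContinuousLinearMap.proj α : (Fin n → ℝ) →L[ℝ] ℝ)) x := fun I =>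
    HasFDerivAt.fun_sum fun α _ => (hasFDerivAt_apply α x).const_mul (I α : ℝ)
  have hsum : HasFDerivAt (fun x : Fin n → ℝ => ∑ α, x α)
      (∑ α, (ContinuousLinearMap.proj α : (Fin n → ℝ) →L[ℝ] ℝ)) x :=
    HasFDerivAt.fun_sum fun α _ => hasFDerivAt_apply α x
  have hnum := HasFDerivAt.fun_sum (u := 𝓘) fun I _ => ((hlin I).exp).const_mul (a I)
  have hd := (hnum.log hS).sub hsum
  have key := (hd.congr_of_eventuallyEq (Eventually.of_forall hux)).fderiv
  rw [pderivAt, key]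
  simp only [sub_apply, smul_apply, FunLike.coe_sum, Finset.sum_apply,
    ContinuousLinearMap.proj_apply, smul_eq_mul, Pi.single_apply, mul_ite, mul_one, mul_zero,
    Finset.sum_ite_eq', Finset.mem_univ, if_true]
  rw [div_eq_inv_mul]
  congr 2
  exact Finset.sum_congr rfl fun I _ => by ring

/-- On the slice `x_i = t`, the exponential `e^{I·x}` converges, as the remaining variables tend
to `−∞`, to `e^{I_i t}` if `I` is supported at `i`, and to `0` otherwise. -/
lemma tendsto_exp_slice {n : ℕ} (i : Fin n) (t : ℝ) (I : Fin n → ℕ) :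
    Tendsto (fun z : {α : Fin n // α ≠ i} → ℝ =>
      Real.exp (∑ α, (I α : ℝ) * (if h : α = i then t else z ⟨α, h⟩))) atBot
      (nhds (if ∀ α, α ≠ i → I α = 0 then Real.exp ((I i : ℝ) * t) else 0)) := by
  have hsplit : ∀ z : {α : Fin n // α ≠ i} → ℝ,
      (∑ α, (I α : ℝ) * (if h : α = i then t else z ⟨α, h⟩)) =
        (I i : ℝ) * t + ∑ α : {α : Fin n // α ≠ i}, (I α : ℝ) * z α := by
    intro z
    rw [Fintype.sum_eq_add_sum_subtype_ne _ i]
    congr 1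
    · simp
    · exact Finset.sum_congr rfl fun α _ => by rw [dif_neg α.2]
  simp only [hsplit]
  split_ifs with h
  · have : ∀ z : {α : Fin n // α ≠ i} → ℝ,
        ∑ α : {α : Fin n // α ≠ i}, (I α : ℝ) * z α = 0 := fun z =>
      Finset.sum_eq_zero fun α _ => by simp [h α α.2]
    simp only [this, add_zero]
    exact tendsto_const_nhds
  · push Not at h
    obtain ⟨β, hβ, hIβ⟩ := h
    refine Real.tendsto_exp_atBot.comp (tendsto_atBot_add_const_left _ _ ?_)
    have hz : Tendsto (fun z : {α : Fin n // α ≠ i} → ℝ => z ⟨β, hβ⟩) atBot atBot :=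
      tendsto_atBot.2 fun b => (eventually_le_atBot fun _ => b).mono fun z hz => hz _
    refine tendsto_atBot_mono' _ ?_ hz
    -- Once all variables are nonpositive, the sum is at most its single term at `β`.
    filter_upwards [eventually_le_atBot (0 : {α : Fin n // α ≠ i} → ℝ)] with z hz0
    have h1 : (1 : ℝ) ≤ I β := by exact_mod_cast Nat.one_le_iff_ne_zero.2 hIβ
    have hle : ∀ α, z α ≤ 0 := fun α => hz0 α
    rw [Fintype.sum_eq_add_sum_compl (⟨β, hβ⟩ : {α : Fin n // α ≠ i})]
    have hrest : ∑ α ∈ ({⟨β, hβ⟩} : Finset {α : Fin n // α ≠ i})ᶜ, (I α : ℝ) * z α ≤ 0 :=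
      Finset.sum_nonpos fun α _ => mul_nonpos_of_nonneg_of_nonpos (Nat.cast_nonneg _) (hle α)
    nlinarith [hle ⟨β, hβ⟩]

/-- A weighted mean of the exponents `d k`, with weights `w k * exp (d k * t)`, tends to the
largest exponent as `t → +∞`. -/
lemma tendsto_ratio_atTop {κ : Type*} (s : Finset κ) (hs : s.Nonempty) (w : κ → ℝ)
    (hw : ∀ k ∈ s, 0 < w k) (d : κ → ℕ) :
    Tendsto (fun t : ℝ => (∑ k ∈ s, w k * (d k : ℝ) * Real.exp ((d k : ℝ) * t)) /
      (∑ k ∈ s, w k * Real.exp ((d k : ℝ) * t))) atTop (nhds ((s.sup d : ℕ) : ℝ)) := by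
  set m := s.sup d with hm
  have hE : ∀ k ∈ s, Tendsto (fun t : ℝ => Real.exp (((d k : ℝ) - m) * t)) atTop
      (nhds (if d k = m then 1 else 0)) := by
    intro k hk
    split_ifs with h
    · simp [h]
    · have hlt : d k < m := lt_of_le_of_ne (Finset.le_sup hk) h
      have : (d k : ℝ) - m < 0 := sub_neg.2 (by exact_mod_cast hlt)
      exact Real.tendsto_exp_atBot.comp (tendsto_id.const_mul_atTop_of_neg this)
  have hnum := tendsto_finsetSum s fun k hk => (hE k hk).const_mul (w k * (d k : ℝ))
  have hden := tendsto_finsetSum s fun k hk => (hE k hk).const_mul (w k)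
  obtain ⟨k₀, hk₀, hk₀m⟩ := Finset.exists_mem_eq_sup s hs d
  have hpos : 0 < ∑ k ∈ s, w k * (if d k = m then (1 : ℝ) else 0) := by
    refine Finset.sum_pos' (fun k hk => ?_) ⟨k₀, hk₀, ?_⟩
    · exact mul_nonneg (hw k hk).le (by split_ifs <;> norm_num)
    · rw [if_pos (hk₀m.symm.trans hm.symm), mul_one]
      exact hw k₀ hk₀
  have hlim := hnum.div hden hpos.ne'
  have hval : ∑ k ∈ s, w k * (d k : ℝ) * (if d k = m then (1 : ℝ) else 0) =
      (m : ℝ) * ∑ k ∈ s, w k * (if d k = m then (1 : ℝ) else 0) := by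
    rw [Finset.mul_sum]
    refine Finset.sum_congr rfl fun k _ => ?_
    split_ifs with h
    · rw [h]; ring
    · simp
  rw [hval, mul_div_cancel_right₀ _ hpos.ne'] at hlim
  refine hlim.congr fun t => ?_
  have hexp : ∀ k, Real.exp (((d k : ℝ) - m) * t) =
      Real.exp ((d k : ℝ) * t) * Real.exp (-(m * t)) := fun k => by
    rw [← Real.exp_add]; ring_nf
  simp only [Pi.div_apply, hexp, ← mul_assoc, ← Finset.sum_mul]
  exact mul_div_mul_right _ _ (Real.exp_pos _).ne'

/-- limits of the partial derivatives of a function of type (★) as all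
variables `x_α` with `α ≠ i` tend to `−∞`, and the limit of `L_i` at `+∞`. -/
theorem stmt1 {n : ℕ} (hn : 1 ≤ n) (u : (Fin n → ℝ) → ℝ)
    (𝓘 : Finset (Fin n → ℕ)) (a : (Fin n → ℕ) → ℝ)
    (hu : IsTypeStar u 𝓘 a) (i : Fin n)
    (𝓘hat : Finset (Fin n → ℕ))
    (h𝓘hat : 𝓘hat = 𝓘.filter fun I => ∀ α, α ≠ i → I α = 0)
    (L : ℝ → ℝ)
    (hL : ∀ t, L t =
      (∑ I ∈ 𝓘hat, a I * (I i : ℝ) * Real.exp ((I i : ℝ) * t)) /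
        (∑ I ∈ 𝓘hat, a I * Real.exp ((I i : ℝ) * t)) - 1) :
    (∀ j, j ≠ i → ∀ t : ℝ,
      Tendsto (fun z : {α : Fin n // α ≠ i} → ℝ =>
        gradMap u (fun α => if h : α = i then t else z ⟨α, h⟩) j) atBot (nhds (-1))) ∧
    (∀ t : ℝ,
      Tendsto (fun z : {α : Fin n // α ≠ i} → ℝ =>
        gradMap u (fun α => if h : α = i then t else z ⟨α, h⟩) i) atBot (nhds (L t))) ∧
    Tendsto L atTop (nhds (((𝓘hat.sup fun I => I i : ℕ) : ℝ) - 1)) := by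
  obtain ⟨hmem, hpos, -, -⟩ := id hu
  have hne : 𝓘hat.Nonempty := ⟨0, by simp [h𝓘hat, hmem 0 (by simp)]⟩
  have hposhat : ∀ I ∈ 𝓘hat, 0 < a I := fun I hI =>
    hpos I (Finset.mem_of_mem_filter I (h𝓘hat ▸ hI))
  -- The common limit of (a) and (b), with `I_j` in the numerator.
  have hgrad : ∀ (j : Fin n) (t : ℝ), Tendsto (fun z : {α : Fin n // α ≠ i} → ℝ =>
      gradMap u (fun α => if h : α = i then t else z ⟨α, h⟩) j) atBot
      (nhds ((∑ I ∈ 𝓘hat, a I * (I j : ℝ) * Real.exp ((I i : ℝ) * t)) /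
        (∑ I ∈ 𝓘hat, a I * Real.exp ((I i : ℝ) * t)) - 1)) := by
    intro j t
    have hden : (∑ I ∈ 𝓘hat, a I * Real.exp ((I i : ℝ) * t)) ≠ 0 :=
      (Finset.sum_pos (fun I hI => mul_pos (hposhat I hI) (Real.exp_pos _)) hne).ne'
    have hsum : ∀ c : (Fin n → ℕ) → ℝ, Tendsto (fun z : {α : Fin n // α ≠ i} → ℝ =>
        ∑ I ∈ 𝓘, c I * Real.exp (∑ α, (I α : ℝ) * (if h : α = i then t else z ⟨α, h⟩))) atBot
        (nhds (∑ I ∈ 𝓘hat, c I * Real.exp ((I i : ℝ) * t))) := by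
      intro c
      have h := tendsto_finsetSum 𝓘 fun I _ => (tendsto_exp_slice i t I).const_mul (c I)
      simp only [mul_ite, mul_zero] at h
      rwa [← Finset.sum_filter, ← h𝓘hat] at h
    simp only [gradMap, pderivAt_typeStar hu]
    exact ((hsum fun I => a I * (I j : ℝ)).div (hsum a) hden).sub_const 1
  refine ⟨fun j hj t => ?_, fun t => ?_, ?_⟩
  · have hzero : ∑ I ∈ 𝓘hat, a I * (I j : ℝ) * Real.exp ((I i : ℝ) * t) = 0 :=
      Finset.sum_eq_zero fun I hI => by
        rw [h𝓘hat] at hI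
        simp [(Finset.mem_filter.1 hI).2 j hj]
    have h := hgrad j t
    rwa [hzero, zero_div, zero_sub] at h
  · rw [hL t]
    exact hgrad i t
  · rw [show L = _ from funext hL]
    exact (tendsto_ratio_atTop 𝓘hat hne a hposhat fun I => I i).sub_const 1
end

section
/- For every n ≥ 1, the function u : ℝⁿ → ℝ defined by u(x) = (n+1)·log(1 + (1/(n+1))·Σ_{i=1}^n e^{x_i}) − Σ_{i=1}^n x_i is of type (★) and satisfies the Monge–Ampère equation det D²u = e^{−u} on all of ℝⁿ; moreover, the closure of Du(ℝⁿ) is the n-simplex with the n+1 vertices (−1,…,−1) and (n+1)e_i − (1,…,1) = (−1,…,−1,n,−1,…,−1) for i = 1,…,n. -/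
/-!
Write `T x = 1 + (∑ e^{x_i})/(n+1)`, so `u = (n+1) log T - ∑ x_i`.

* Expanding `T^(n+1)` by the binomial and multinomial theorems exhibits `u` as a function of
  type (★): the coefficient of `e^{I·x}` is `C(n+1,|I|) · (|I|!/∏ I_i!) / (n+1)^{|I|}`, which is
  positive for `|I| ≤ n+1` and equal to `1` for `|I| ≤ 1`.
* `∂_j u = e^{x_j}/T - 1`, so the Hessian is a diagonal matrix times a rank-one perturbation of the
  identity (`hessMat_eq`). The matrix determinant lemma gives
  `det D²u = (∏ e^{x_i}) / T^(n+1) = e^{-u}`.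
* `Du` maps onto the open simplex `{v_i > -1, ∑ v_i < 1}` (`range_gradMap`). Its closure is the
  closed simplex, as one sees by scaling towards the origin (`closure_openSimplex`), and the closed
  simplex is the convex hull of its vertices by explicit barycentric coordinates
  (`convexHull_vertices`).
-/

open Real Filter MeasureTheory

/-- The affine-exponential function `T x = 1 + (∑ e^{x_i})/(n+1)`, so that
`u = (n+1) log T - ∑ x_i`. -/
noncomputable def affExp {n : ℕ} (x : Fin n → ℝ) : ℝ :=
  1 + (1 / ((n : ℝ) + 1)) * ∑ i, Real.exp (x i)

lemma affExp_pos {n : ℕ} (x : Fin n → ℝ) : 0 < affExp x := by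
  unfold affExp
  positivity

lemma hasFDerivAt_affExp {n : ℕ} (x : Fin n → ℝ) :
    HasFDerivAt (affExp (n := n)) ((1 / ((n : ℝ) + 1)) •
      ∑ i, Real.exp (x i) • ContinuousLinearMap.proj (R := ℝ) (φ := fun _ : Fin n => ℝ) i) x := by
  unfold affExp
  refine HasFDerivAt.const_add _ (HasFDerivAt.const_mul ?_ _)
  refine HasFDerivAt.fun_sum fun i _ => ?_
  exact (hasFDerivAt_apply (𝕜 := ℝ) i x).exp

lemma pderivAt_eq {n : ℕ} (u : (Fin n → ℝ) → ℝ)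
    (hu : ∀ x, u x = ((n : ℝ) + 1) * Real.log (affExp x) - ∑ i, x i) (j : Fin n) :
    pderivAt u j = fun x => Real.exp (x j) / affExp x - 1 := by
  funext x
  have hT := affExp_pos x
  have h := (((hasFDerivAt_affExp x).log hT.ne').const_mul ((n : ℝ) + 1)).sub
      (HasFDerivAt.fun_sum (u := Finset.univ) fun i _ => hasFDerivAt_apply (𝕜 := ℝ) i x)
  rw [pderivAt, funext hu]
  refine (DFunLike.congr_fun h.fderiv _).trans ?_
  simp [Pi.single_apply]
  field_simp

lemma hessMat_eq {n : ℕ} (u : (Fin n → ℝ) → ℝ)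
    (hu : ∀ x, u x = ((n : ℝ) + 1) * Real.log (affExp x) - ∑ i, x i) (x : Fin n → ℝ) :
    hessMat u x = Matrix.diagonal (fun i => Real.exp (x i) / affExp x) *
      (1 + Matrix.vecMulVec (fun _ => 1)
        (fun j => -(Real.exp (x j) / (((n : ℝ) + 1) * affExp x)))) := by
  have hT := affExp_pos x
  ext i j
  have h := (((hasFDerivAt_apply (𝕜 := ℝ) j x).exp).mul
      ((hasDerivAt_inv hT.ne').comp_hasFDerivAt x (hasFDerivAt_affExp x))).sub_const 1
  rw [hessMat, Matrix.of_apply, pderivAt, pderivAt_eq u hu j]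
  simp only [div_eq_mul_inv (Real.exp _) (affExp _)]
  refine (DFunLike.congr_fun h.fderiv _).trans ?_
  rw [Matrix.diagonal_mul, Matrix.add_apply,
    Matrix.vecMulVec_apply, Matrix.one_apply]
  by_cases hij : i = j
  · subst hij
    simp [Pi.single_apply]
    field_simp
    ring
  · simp [Pi.single_apply, hij, Ne.symm hij]
    field_simp

lemma satisfiesMA {n : ℕ} (u : (Fin n → ℝ) → ℝ)
    (hu : ∀ x, u x = ((n : ℝ) + 1) * Real.log (affExp x) - ∑ i, x i) : SatisfiesMA u := by
  intro x
  have hT := affExp_pos x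
  have hS : ∑ i, Real.exp (x i) = ((n : ℝ) + 1) * (affExp x - 1) := by
    unfold affExp
    field_simp
    ring
  have h1 : Real.exp (-(u x)) = (∏ i, Real.exp (x i)) / affExp x ^ (n + 1) := by
    rw [hu, neg_sub, Real.exp_sub, Real.exp_sum]
    congr 1
    rw [← Nat.cast_succ, Real.exp_nat_mul, Real.exp_log hT]
  rw [hessMat_eq u hu, Matrix.det_mul, Matrix.det_diagonal, Matrix.vecMulVec_eq Unit,
    Matrix.det_one_add_replicateCol_mul_replicateRow, h1]
  have h2 : (fun j => -(Real.exp (x j) / (((n : ℝ) + 1) * affExp x))) ⬝ᵥ (fun _ : Fin n => (1 : ℝ))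
      = -((affExp x - 1) / affExp x) := by
    simp only [dotProduct, mul_one, Finset.sum_neg_distrib]
    rw [← Finset.sum_div, hS]
    field_simp
  rw [h2, Finset.prod_div_distrib]
  simp only [Finset.prod_const, Finset.card_univ, Fintype.card_fin]
  field_simp
  ring

/-- Expanding `T^(n+1)` first binomially and then multinomially gives the exponents
`|I| ≤ n+1` and the coefficients `C(n+1,|I|) · (|I|!/∏ I_i!) · (n+1)^{-|I|}`. -/
lemma isTypeStar {n : ℕ} (u : (Fin n → ℝ) → ℝ)
    (hu : ∀ x, u x = ((n : ℝ) + 1) * Real.log (affExp x) - ∑ i, x i) :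
    ∃ (𝓘 : Finset (Fin n → ℕ)) (a : (Fin n → ℕ) → ℝ), IsTypeStar u 𝓘 a := by
  refine ⟨(Finset.range (n + 2)).biUnion (Finset.piAntidiag Finset.univ),
    fun I => ((n + 1).choose (∑ i, I i) : ℝ) * Nat.multinomial Finset.univ I /
      ((n : ℝ) + 1) ^ (∑ i, I i), ?_, ?_, ?_, ?_⟩
  · intro I hI
    exact Finset.mem_biUnion.2 ⟨∑ i, I i, Finset.mem_range.2 (by omega), by simp⟩
  · intro I hI
    have h : ∑ i, I i ≤ n + 1 := by
      obtain ⟨m, hm, hI⟩ := Finset.mem_biUnion.1 hI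
      rw [(Finset.mem_piAntidiag.1 hI).1]
      exact Nat.lt_succ_iff.1 (Finset.mem_range.1 hm)
    have h1 : 0 < (n + 1).choose (∑ i, I i) := Nat.choose_pos h
    have h2 : 0 < Nat.multinomial Finset.univ I := Nat.multinomial_pos _ _
    positivity
  · intro I hI
    have h1 : ∏ i, (I i).factorial = 1 := by
      refine Finset.prod_eq_one fun i _ => ?_
      have : I i ≤ ∑ i, I i := Finset.single_le_sum (fun _ _ => Nat.zero_le _) (Finset.mem_univ i)
      exact Nat.factorial_eq_one.2 (this.trans hI)
    have h2 : Nat.multinomial Finset.univ I = 1 := by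
      rw [Nat.multinomial, h1, Nat.factorial_eq_one.2 hI]
    simp only [h2]
    rcases Nat.le_one_iff_eq_zero_or_eq_one.1 hI with h | h
    · simp [h]
    · simp only [h, Nat.choose_one_right]
      push_cast
      field_simp
  · intro x
    rw [hu]
    congr 1
    rw [← Nat.cast_succ, ← Real.log_pow]
    congr 1
    rw [Finset.sum_biUnion]
    · rw [affExp, add_comm, add_pow]
      refine Finset.sum_congr rfl fun m _ => ?_
      rw [mul_pow, Finset.sum_pow_eq_sum_piAntidiag]
      simp only [one_pow, mul_one, Finset.mul_sum, Finset.sum_mul]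
      refine Finset.sum_congr rfl fun I hI => ?_
      have hs : ∑ i, I i = m := by simpa using hI
      have he : ∏ i, Real.exp (x i) ^ I i = Real.exp (∑ i, (I i : ℝ) * x i) := by
        rw [Real.exp_sum]
        exact Finset.prod_congr rfl fun i _ => (Real.exp_nat_mul _ _).symm
      rw [he, hs, Nat.cast_succ, one_div, inv_pow]
      ring
    · intro a _ b _ hab
      exact Finset.disjoint_left.2 fun I h1 h2 => hab (by
        simp at h1 h2
        omega)

lemma range_gradMap {n : ℕ} (u : (Fin n → ℝ) → ℝ)
    (hu : ∀ x, u x = ((n : ℝ) + 1) * Real.log (affExp x) - ∑ i, x i) :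
    Set.range (gradMap u) = {v | (∀ i, -1 < v i) ∧ ∑ i, v i < 1} := by
  have hg : ∀ x j, gradMap u x j = Real.exp (x j) / affExp x - 1 := fun x j => by
    rw [gradMap, pderivAt_eq u hu]
  ext v
  constructor
  · rintro ⟨x, rfl⟩
    have hT := affExp_pos x
    refine ⟨fun i => ?_, ?_⟩
    · rw [hg]
      have : 0 < Real.exp (x i) / affExp x := by positivity
      linarith
    · have hS : ∑ i, Real.exp (x i) = ((n : ℝ) + 1) * (affExp x - 1) := by
        unfold affExp
        field_simp
        ring
      simp only [hg, Finset.sum_sub_distrib, ← Finset.sum_div, hS]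
      simp only [Finset.sum_const, Finset.card_univ, Fintype.card_fin, nsmul_eq_mul, mul_one]
      rw [sub_lt_iff_lt_add', div_lt_iff₀ hT]
      nlinarith [(Nat.cast_nonneg n : (0 : ℝ) ≤ n)]
  · rintro ⟨h0, h1⟩
    -- Solving `e^{x_j} = (v_j + 1) T` for `T = 1 + ∑ e^{x_j} / (n+1)` gives this value of `T`.
    set T : ℝ := ((n : ℝ) + 1) / (1 - ∑ i, v i) with hTdef
    have hd : 0 < 1 - ∑ i, v i := by linarith
    have hT : 0 < T := by positivity
    have he : ∀ j, Real.exp (Real.log ((v j + 1) * T)) = (v j + 1) * T := fun j =>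
      Real.exp_log (mul_pos (by linarith [h0 j]) hT)
    have hA : affExp (fun j => Real.log ((v j + 1) * T)) = T := by
      unfold affExp
      simp only [he]
      rw [← Finset.sum_mul, Finset.sum_add_distrib]
      simp
      rw [hTdef]
      field_simp
      ring
    refine ⟨fun j => Real.log ((v j + 1) * T), ?_⟩
    ext j
    rw [hg, hA, he]
    field_simp
    ring

/-- The open simplex is star-shaped about the origin with respect to the closed one: `s • v` is in
the open simplex for `v` in the closed one and `0 ≤ s < 1`. -/
lemma closure_openSimplex (n : ℕ) :
    closure {v : Fin n → ℝ | (∀ i, -1 < v i) ∧ ∑ i, v i < 1} =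
      {v | (∀ i, -1 ≤ v i) ∧ ∑ i, v i ≤ 1} := by
  apply subset_antisymm
  · refine closure_minimal (fun v hv => ⟨fun i => (hv.1 i).le, hv.2.le⟩) ?_
    rw [Set.ofPred_and, Set.ofPred_forall]
    exact (isClosed_iInter fun i => isClosed_le (by fun_prop) (by fun_prop)).inter
      (isClosed_le (by fun_prop) (by fun_prop))
  · rintro v ⟨h0, h1⟩
    have ht : Tendsto (fun s : ℝ => s • v) (nhdsWithin 1 (Set.Iio 1)) (nhds v) := by
      have : Continuous fun s : ℝ => s • v := by fun_prop
      simpa using (this.tendsto 1).mono_left nhdsWithin_le_nhds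
    refine mem_closure_of_tendsto ht ?_
    filter_upwards [Ioo_mem_nhdsLT (show (0 : ℝ) < 1 by norm_num)] with s hs
    refine ⟨fun i => ?_, ?_⟩
    · simp only [Pi.smul_apply, smul_eq_mul]
      nlinarith [h0 i, hs.1, hs.2]
    · simp only [Pi.smul_apply, smul_eq_mul, ← Finset.mul_sum]
      nlinarith [hs.1, hs.2]

lemma convexHull_vertices (n : ℕ) :
    convexHull ℝ (insert (fun _ => (-1 : ℝ))
        {v : Fin n → ℝ | ∃ i : Fin n, v = fun j => if j = i then (n : ℝ) else -1}) =
      {v | (∀ i, -1 ≤ v i) ∧ ∑ i, v i ≤ 1} := by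
  apply subset_antisymm
  · refine convexHull_min ?_ ?_
    · rintro v (rfl | ⟨i, rfl⟩)
      · refine ⟨fun _ => le_rfl, ?_⟩
        simp
        linarith [(Nat.cast_nonneg n : (0 : ℝ) ≤ n)]
      · refine ⟨fun j => ?_, ?_⟩
        · dsimp only
          split_ifs
          · linarith [(Nat.cast_nonneg n : (0 : ℝ) ≤ n)]
          · exact le_rfl
        · have : ∀ j, (if j = i then (n : ℝ) else -1) = (if j = i then (n : ℝ) + 1 else 0) + -1 := by
            intro j
            split_ifs <;> ring
          simp only [this, Finset.sum_add_distrib]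
          simp
    · rintro v ⟨h0, h1⟩ w ⟨k0, k1⟩ a b ha hb hab
      refine ⟨fun i => ?_, ?_⟩
      · simp only [Pi.add_apply, Pi.smul_apply, smul_eq_mul]
        nlinarith [h0 i, k0 i]
      · simp only [Pi.add_apply, Pi.smul_apply, smul_eq_mul, Finset.sum_add_distrib,
          ← Finset.mul_sum]
        nlinarith
  · rintro v ⟨h0, h1⟩
    -- The barycentric coordinates of `v`; `none` stands for the vertex `(-1, …, -1)`.
    let w : Option (Fin n) → ℝ := fun o => o.elim ((1 - ∑ i, v i) / ((n : ℝ) + 1))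
      (fun i => (v i + 1) / ((n : ℝ) + 1))
    let z : Option (Fin n) → Fin n → ℝ := fun o => o.elim (fun _ => -1)
      (fun i j => if j = i then (n : ℝ) else -1)
    have hw1 : ∑ o, w o = 1 := by
      simp only [w, Fintype.sum_option, Option.elim, ← Finset.sum_div, Finset.sum_add_distrib]
      simp
      field_simp
      ring
    have hv : ∑ o, w o • z o = v := by
      ext j
      have hz : ∀ o, w o * z o j = w o * (z o j + 1) - w o := fun o => by ring
      simp only [Finset.sum_apply, Pi.smul_apply, smul_eq_mul, hz, Finset.sum_sub_distrib, hw1]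
      have : ∀ i, (if j = i then (n : ℝ) else -1) + 1 = if j = i then (n : ℝ) + 1 else 0 := by
        intro i
        split_ifs <;> ring
      simp only [Fintype.sum_option, w, z, Option.elim, this]
      simp
      field_simp
      ring
    rw [← hv]
    refine (convex_convexHull ℝ _).sum_mem ?_ hw1 ?_
    · rintro (_ | i) _
      · exact div_nonneg (by linarith) (by positivity)
      · exact div_nonneg (by linarith [h0 i]) (by positivity)
    · rintro (_ | i) _
      · exact subset_convexHull ℝ _ (Set.mem_insert _ _)
      · exact subset_convexHull ℝ _ (Set.mem_insert_of_mem _ ⟨i, rfl⟩)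

/-- `u(x) = (n+1) log(1 + (∑ e^{x_i})/(n+1)) − ∑ x_i` is of type (★),
solves `det D²u = e^{−u}` on `ℝⁿ`, and the closure of its gradient image is the
`n`-simplex with vertices `−𝟏` and `(n+1)e_i − 𝟏`. -/
theorem stmt2 {n : ℕ} (hn : 1 ≤ n) (u : (Fin n → ℝ) → ℝ)
    (hu : ∀ x, u x =
      ((n : ℝ) + 1) * Real.log (1 + (1 / ((n : ℝ) + 1)) * ∑ i, Real.exp (x i)) - ∑ i, x i) :
    (∃ (𝓘 : Finset (Fin n → ℕ)) (a : (Fin n → ℕ) → ℝ), IsTypeStar u 𝓘 a) ∧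
    SatisfiesMA u ∧
    closure (Set.range (gradMap u)) =
      convexHull ℝ (insert (fun _ => (-1 : ℝ))
        {v : Fin n → ℝ | ∃ i : Fin n, v = fun j => if j = i then (n : ℝ) else -1}) := by
  have hu' : ∀ x, u x = ((n : ℝ) + 1) * Real.log (affExp x) - ∑ i, x i := hu
  refine ⟨isTypeStar u hu', satisfiesMA u hu', ?_⟩
  rw [range_gradMap u hu', closure_openSimplex, convexHull_vertices]
end

section
/- Let u : ℝ → ℝ be a function of type (★) in one variable, i.e. u(x) = log(Σ_{k∈𝓘} a_k e^{kx}) − x with 𝓘 ⊂ ℕ finite containing 0 and 1, a_k > 0 for all k ∈ 𝓘 and a₀ = a₁ = 1. If u satisfies u''(x) = e^{−u(x)} for all x ∈ ℝ, then u(x) = 2·log(1 + e^x/2) − x, i.e. 𝓘 = {0,1,2} with a₂ = 1/4. -/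
/-!
Write `u x = log (P (e^x)) - x` with `P = ∑ a_k X^k`, and let `θ = X · d/dX`. Since `d/dx` acts on
functions of `e^x` as `θ`, the equation `u'' = e^{-u}` becomes the polynomial identity
`θ²P · P - (θP)² = X · P` (it holds at every point `e^x`, hence identically). Its coefficient of
degree `n + 1` reads `∑_{i+j=n+1} i (i - j) p_i p_j = p_n`, where `p_{n+1}` appears only in the term
`(n+1)² p_{n+1} p_0`. So the polynomial solutions with `p_0 = 1` are determined by recursion: there
is at most one (`toda_unique`). As `(1 + X/2)²` is a solution, `P = (1 + X/2)²`.
-/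

open Polynomial in
/-- The Euler operator `θ = X · d/dX` on real polynomials. -/
noncomputable def euler (P : ℝ[X]) : ℝ[X] := X * derivative P

open Polynomial in
/-- The polynomial form of `u'' = e^{-u}`, for `u x = log (P (e^x)) - x`. -/
def IsToda (P : ℝ[X]) : Prop := euler (euler P) * P - euler P * euler P = X * P

open Polynomial in
lemma coeff_euler (P : ℝ[X]) (n : ℕ) : (euler P).coeff n = n * P.coeff n := by
  cases n with
  | zero => simp [euler]
  | succ n =>
    rw [euler, coeff_X_mul, coeff_derivative]
    push_cast
    ring

open Polynomial in
lemma hasDerivAt_eval_exp (P : ℝ[X]) (x : ℝ) :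
    HasDerivAt (fun x => P.eval (Real.exp x)) ((euler P).eval (Real.exp x)) x := by
  refine ((P.hasDerivAt (Real.exp x)).comp x (Real.hasDerivAt_exp x)).congr_deriv ?_
  simp [euler, mul_comm]

open Polynomial in
/-- The recursion satisfied by the coefficients; the term with `i = n + 1` is isolated. -/
lemma IsToda.coeff_succ {P : ℝ[X]} (h : IsToda P) (n : ℕ) :
    ((n : ℝ) + 1) ^ 2 * P.coeff (n + 1) * P.coeff 0 +
      ∑ ij ∈ Finset.HasAntidiagonal.antidiagonal n, (ij.1 : ℝ) * (ij.1 - (ij.2 + 1)) *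
        (P.coeff ij.1 * P.coeff (ij.2 + 1)) = P.coeff n := by
  have h' : (euler (euler P) * P - euler P * euler P).coeff (n + 1) = P.coeff n := by
    rw [h, coeff_X_mul]
  simp only [coeff_sub, coeff_mul, coeff_euler] at h'
  rw [← Finset.sum_sub_distrib, Finset.Nat.sum_antidiagonal_succ'] at h'
  rw [← h']
  push_cast
  congr 1
  · ring
  · exact Finset.sum_congr rfl fun _ _ => by ring

open Polynomial in
lemma toda_unique {P Q : ℝ[X]} (hP : IsToda P) (hQ : IsToda Q)
    (hP0 : P.coeff 0 = 1) (hQ0 : Q.coeff 0 = 1) : P = Q := by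
  ext n
  induction n using Nat.strong_induction_on with
  | _ n ih =>
    cases n with
    | zero => rw [hP0, hQ0]
    | succ n =>
      have eP := hP.coeff_succ n
      have eQ := hQ.coeff_succ n
      have hs : ∑ ij ∈ Finset.HasAntidiagonal.antidiagonal n, (ij.1 : ℝ) * (ij.1 - (ij.2 + 1)) *
            (P.coeff ij.1 * P.coeff (ij.2 + 1)) =
          ∑ ij ∈ Finset.HasAntidiagonal.antidiagonal n, (ij.1 : ℝ) * (ij.1 - (ij.2 + 1)) *
            (Q.coeff ij.1 * Q.coeff (ij.2 + 1)) := by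
        refine Finset.sum_congr rfl fun ij hij => ?_
        have hij' := Finset.HasAntidiagonal.mem_antidiagonal.mp hij
        -- The term `i = 0`, which contains the coefficient of degree `n + 1`, has weight zero.
        rcases Nat.eq_zero_or_pos ij.1 with hi | hi
        · simp [hi]
        · rw [ih ij.1 (by omega), ih (ij.2 + 1) (by omega)]
      rw [hs, hP0, ih n (by omega)] at eP
      rw [hQ0] at eQ
      have hn : ((n : ℝ) + 1) ^ 2 ≠ 0 := by positivity
      exact mul_left_cancel₀ hn (by linarith)

open Polynomial in
/-- The equation `u'' = e^{-u}` on the real line yields the polynomial identity, because the points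
`e^x` form an infinite set. -/
lemma isToda_of_deriv (P : ℝ[X]) (u : ℝ → ℝ) (hpos : ∀ x, 0 < P.eval (Real.exp x))
    (hu : ∀ x, u x = Real.log (P.eval (Real.exp x)) - x)
    (hMA : ∀ x, deriv (deriv u) x = Real.exp (-(u x))) : IsToda P := by
  have h1 : deriv u = fun x => (euler P).eval (Real.exp x) / P.eval (Real.exp x) - 1 := by
    funext x
    rw [funext hu]
    exact (((hasDerivAt_eval_exp P x).log (hpos x).ne').sub (hasDerivAt_id x)).deriv
  refine eq_of_infinite_eval_eq _ _ ((Set.Ioi_infinite (0 : ℝ)).mono fun t ht => ?_)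
  obtain ⟨x, rfl⟩ : ∃ x, Real.exp x = t := ⟨Real.log t, Real.exp_log ht⟩
  have h2 := hMA x
  rw [h1, (((hasDerivAt_eval_exp (euler P) x).fun_div (hasDerivAt_eval_exp P x)
    (hpos x).ne').sub_const 1).deriv, hu x, neg_sub, Real.exp_sub, Real.exp_log (hpos x)] at h2
  have hp := (hpos x).ne'
  field_simp at h2
  simp only [Set.mem_ofPred_eq, eval_sub, eval_mul, eval_X]
  linarith

open Polynomial in
lemma isToda_sq : IsToda ((1 + C (1 / 2) * X) ^ 2) := by
  refine Polynomial.funext fun t => ?_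
  simp [euler, derivative_pow]
  ring

/-- the unique one-variable function of type (★) satisfying `u'' = e^{−u}`
is `u(x) = 2 log(1 + e^x/2) − x`, i.e. `𝓘 = {0,1,2}` with `a₂ = 1/4`. -/
theorem stmt3 (u : ℝ → ℝ) (𝓘 : Finset ℕ) (a : ℕ → ℝ)
    (h0 : 0 ∈ 𝓘) (h1 : 1 ∈ 𝓘) (ha : ∀ k ∈ 𝓘, 0 < a k) (ha0 : a 0 = 1) (ha1 : a 1 = 1)
    (hu : ∀ x, u x = Real.log (∑ k ∈ 𝓘, a k * Real.exp ((k : ℝ) * x)) - x)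
    (hMA : ∀ x, deriv (deriv u) x = Real.exp (-(u x))) :
    (∀ x, u x = 2 * Real.log (1 + Real.exp x / 2) - x) ∧
    𝓘 = {0, 1, 2} ∧ a 2 = 1 / 4 := by
  set P : Polynomial ℝ := ∑ k ∈ 𝓘, Polynomial.monomial k (a k) with hP
  have heval : ∀ x, P.eval (Real.exp x) = ∑ k ∈ 𝓘, a k * Real.exp ((k : ℝ) * x) := fun x => by
    simp [hP, Polynomial.eval_finsetSum, Real.exp_nat_mul]
  have hcoeff : ∀ n, P.coeff n = if n ∈ 𝓘 then a n else 0 := fun n => by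
    simp [hP, Polynomial.coeff_monomial]
  have hpos : ∀ x, 0 < P.eval (Real.exp x) := fun x => by
    rw [heval]
    exact Finset.sum_pos (fun k hk => mul_pos (ha k hk) (Real.exp_pos _)) ⟨0, h0⟩
  have hu' : ∀ x, u x = Real.log (P.eval (Real.exp x)) - x := fun x => by rw [heval, hu]
  have hPQ := toda_unique (isToda_of_deriv P u hpos hu' hMA) isToda_sq
    (by rw [hcoeff, if_pos h0, ha0]) (by simp [Polynomial.coeff_zero_eq_eval_zero])
  have hQ : ((1 + Polynomial.C (1 / 2) * Polynomial.X) ^ 2 : Polynomial ℝ) =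
      Polynomial.C 1 * Polynomial.X ^ 0 + Polynomial.C 1 * Polynomial.X ^ 1 +
        Polynomial.C (1 / 4) * Polynomial.X ^ 2 := by
    refine Polynomial.funext fun t => ?_
    simp
    ring
  have hc : ∀ n, (if n ∈ 𝓘 then a n else 0) =
      (if n = 0 then 1 else 0) + (if n = 1 then 1 else 0) + (if n = 2 then (1 / 4 : ℝ) else 0) :=
    fun n => by
      rw [← hcoeff, hPQ, hQ]
      simp only [Polynomial.coeff_add, Polynomial.coeff_C_mul_X_pow]
  have h2 : 2 ∈ 𝓘 := by
    by_contra h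
    have := hc 2
    norm_num [h] at this
  refine ⟨fun x => ?_, ?_, ?_⟩
  · rw [hu', hPQ]
    simp only [Polynomial.eval_pow, Polynomial.eval_add, Polynomial.eval_one, Polynomial.eval_mul,
      Polynomial.eval_C, Polynomial.eval_X, Real.log_pow]
    push_cast
    ring_nf
  · ext n
    simp only [Finset.mem_insert, Finset.mem_singleton]
    constructor
    · intro hn
      by_contra! h
      have := hc n
      simp only [hn, h.1, h.2.1, h.2.2, if_true, if_false] at this
      linarith [ha n hn]
    · rintro (rfl | rfl | rfl) <;> assumption
  · have := hc 2
    norm_num [h2] at this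
    linarith
end

section
/- Let u : ℝᵏ → ℝ and v : ℝʰ → ℝ be functions of type (★) satisfying respectively det D²u = e^{−u} on ℝᵏ and det D²v = e^{−v} on ℝʰ, with associated polytopes 𝒫 (the closure of Du(ℝᵏ)) and 𝒬 (the closure of Dv(ℝʰ)). Then the function w : ℝ^{k+h} → ℝ defined by w(x,y) = u(x) + v(y) is of type (★) and satisfies det D²w = e^{−w} on ℝ^{k+h}, and its associated polytope (the closure of Dw(ℝ^{k+h})) is the cartesian product 𝒫 × 𝒬. -/
/-! The type (★) functions are smooth, so derivatives of a sum in separated variables may be taken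
block by block. The gradient of `w` at `(x, y)` is therefore `(Du x, Dv y)`, and the range of `Dw`
is the product of the ranges of `Du` and `Dv`; closures commute with products. Likewise `D²w` is
block diagonal with blocks `D²u` and `D²v`, so its determinant is
`e^{-u} e^{-v} = e^{-w}`. Finally, the product of the two exponential sums inside the logarithms is
again an exponential sum, over the concatenated multi-indices `(I, J)` with coefficients `a_I a_J`;
a concatenation of length at most one has both parts of length at most one, which gives the
normalization of the coefficients. -/

open Real Filter MeasureTheory

/-- The argument of the logarithm is positive: its terms are positive, and the zero multi-index
belongs to the index set. -/
lemma IsTypeStar.sum_pos {n : ℕ} {u : (Fin n → ℝ) → ℝ} {s : Finset (Fin n → ℕ)}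
    {a : (Fin n → ℕ) → ℝ} (hu : IsTypeStar u s a) (x : Fin n → ℝ) :
    0 < ∑ I ∈ s, a I * Real.exp (∑ i, (I i : ℝ) * x i) :=
  Finset.sum_pos (fun I hI => mul_pos (hu.2.1 I hI) (Real.exp_pos _)) ⟨0, hu.1 0 (by simp)⟩

lemma IsTypeStar.contDiff {n : ℕ} {u : (Fin n → ℝ) → ℝ} {s : Finset (Fin n → ℕ)}
    {a : (Fin n → ℕ) → ℝ} (hu : IsTypeStar u s a) : ContDiff ℝ 2 u := by
  rw [funext hu.2.2.2]
  refine ContDiff.sub (ContDiff.log ?_ fun x => (hu.sum_pos x).ne') (by fun_prop)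
  fun_prop

lemma ContDiff.differentiable_pderivAt {n : ℕ} {u : (Fin n → ℝ) → ℝ} (hu : ContDiff ℝ 2 u)
    (i : Fin n) : Differentiable ℝ (pderivAt u i) := by
  have h : Differentiable ℝ (fderiv ℝ u) :=
    (hu.fderiv_right (m := 1) (by norm_num)).differentiable (by norm_num)
  intro x
  exact (h x).clm_apply (differentiableAt_const _)

section Separated

variable {k h : ℕ} {f : (Fin k → ℝ) → ℝ} {g : (Fin h → ℝ) → ℝ} {w : (Fin (k + h) → ℝ) → ℝ}

/-- Differentiating a sum in separated variables in a direction `e` differentiates each summand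
along the corresponding block of `e`. -/
lemma fderiv_separated (hf : Differentiable ℝ f) (hg : Differentiable ℝ g)
    (hw : ∀ x, w x = f (fun i => x (Fin.castAdd h i)) + g (fun j => x (Fin.natAdd k j)))
    (x e : Fin (k + h) → ℝ) :
    fderiv ℝ w x e =
      fderiv ℝ f (fun i => x (Fin.castAdd h i)) (fun i => e (Fin.castAdd h i)) +
      fderiv ℝ g (fun j => x (Fin.natAdd k j)) (fun j => e (Fin.natAdd k j)) := by
  let P : (Fin (k + h) → ℝ) →L[ℝ] (Fin k → ℝ) :=
    ContinuousLinearMap.pi fun i => ContinuousLinearMap.proj (Fin.castAdd h i)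
  let Q : (Fin (k + h) → ℝ) →L[ℝ] (Fin h → ℝ) :=
    ContinuousLinearMap.pi fun j => ContinuousLinearMap.proj (Fin.natAdd k j)
  have hP : HasFDerivAt (fun x => f (P x)) ((fderiv ℝ f (P x)).comp P) x :=
    (hf (P x)).hasFDerivAt.comp x P.hasFDerivAt
  have hQ : HasFDerivAt (fun x => g (Q x)) ((fderiv ℝ g (Q x)).comp Q) x :=
    (hg (Q x)).hasFDerivAt.comp x Q.hasFDerivAt
  have hsum := (hP.add hQ).fderiv
  have hweq : w = (fun x => f (P x)) + fun x => g (Q x) := funext hw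
  rw [hweq, hsum]
  rfl

lemma pderivAt_castAdd (hf : Differentiable ℝ f) (hg : Differentiable ℝ g)
    (hw : ∀ x, w x = f (fun i => x (Fin.castAdd h i)) + g (fun j => x (Fin.natAdd k j)))
    (i : Fin k) (x : Fin (k + h) → ℝ) :
    pderivAt w (Fin.castAdd h i) x = pderivAt f i (fun i => x (Fin.castAdd h i)) := by
  have h1 : (fun l => (Pi.single (Fin.castAdd h i) 1 : Fin (k + h) → ℝ) (Fin.castAdd h l)) =
      Pi.single i 1 := by
    ext l; simp [Pi.single_apply]
  have h2 : (fun l => (Pi.single (Fin.castAdd h i) 1 : Fin (k + h) → ℝ) (Fin.natAdd k l)) = 0 := by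
    ext l
    have : Fin.natAdd k l ≠ Fin.castAdd h i := by
      intro hc
      have := congrArg Fin.val hc
      simp only [Fin.val_natAdd, Fin.val_castAdd] at this
      omega
    simp [this]
  rw [pderivAt, fderiv_separated hf hg hw, h1, h2, map_zero, add_zero, pderivAt]

lemma pderivAt_natAdd (hf : Differentiable ℝ f) (hg : Differentiable ℝ g)
    (hw : ∀ x, w x = f (fun i => x (Fin.castAdd h i)) + g (fun j => x (Fin.natAdd k j)))
    (j : Fin h) (x : Fin (k + h) → ℝ) :
    pderivAt w (Fin.natAdd k j) x = pderivAt g j (fun j => x (Fin.natAdd k j)) := by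
  have h1 : (fun l => (Pi.single (Fin.natAdd k j) 1 : Fin (k + h) → ℝ) (Fin.natAdd k l)) =
      Pi.single j 1 := by
    ext l; simp [Pi.single_apply]
  have h2 : (fun l => (Pi.single (Fin.natAdd k j) 1 : Fin (k + h) → ℝ) (Fin.castAdd h l)) = 0 := by
    ext l
    have : Fin.castAdd h l ≠ Fin.natAdd k j := by
      intro hc
      have := congrArg Fin.val hc
      simp only [Fin.val_natAdd, Fin.val_castAdd] at this
      omega
    simp [this]
  rw [pderivAt, fderiv_separated hf hg hw, h1, h2, map_zero, zero_add, pderivAt]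

lemma pderivAt_zero_fun {n : ℕ} (i : Fin n) (x : Fin n → ℝ) :
    pderivAt (fun _ => (0 : ℝ)) i x = 0 := by
  simp [pderivAt]

lemma hessMat_separated (hf : ContDiff ℝ 2 f) (hg : ContDiff ℝ 2 g)
    (hw : ∀ x, w x = f (fun i => x (Fin.castAdd h i)) + g (fun j => x (Fin.natAdd k j)))
    (x : Fin (k + h) → ℝ) :
    (hessMat w x).submatrix finSumFinEquiv finSumFinEquiv =
      Matrix.fromBlocks (hessMat f (fun i => x (Fin.castAdd h i))) 0 0
        (hessMat g (fun j => x (Fin.natAdd k j))) := by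
  have hfd := hf.differentiable (by norm_num)
  have hgd := hg.differentiable (by norm_num)
  -- Each first partial derivative is itself separated, with one of the two summands zero.
  have hl (i : Fin k) (x : Fin (k + h) → ℝ) : pderivAt w (Fin.castAdd h i) x =
      pderivAt f i (fun i => x (Fin.castAdd h i)) +
        (fun _ => (0 : ℝ)) (fun j => x (Fin.natAdd k j)) := by
    rw [pderivAt_castAdd hfd hgd hw, add_zero]
  have hr (j : Fin h) (x : Fin (k + h) → ℝ) : pderivAt w (Fin.natAdd k j) x =
      (fun _ => (0 : ℝ)) (fun i => x (Fin.castAdd h i)) +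
        pderivAt g j (fun j => x (Fin.natAdd k j)) := by
    rw [pderivAt_natAdd hfd hgd hw, zero_add]
  have h0 {n : ℕ} : Differentiable ℝ (fun _ : Fin n → ℝ => (0 : ℝ)) := differentiable_const _
  ext (i | i) (j | j)
  · simpa [hessMat] using pderivAt_castAdd (hf.differentiable_pderivAt j) h0 (hl j) i x
  · simpa [hessMat, pderivAt_zero_fun] using
      pderivAt_castAdd h0 (hg.differentiable_pderivAt j) (hr j) i x
  · simpa [hessMat, pderivAt_zero_fun] using
      pderivAt_natAdd (hf.differentiable_pderivAt j) h0 (hl j) i x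
  · simpa [hessMat] using pderivAt_natAdd h0 (hg.differentiable_pderivAt j) (hr j) i x

lemma det_hessMat_separated (hf : ContDiff ℝ 2 f) (hg : ContDiff ℝ 2 g)
    (hw : ∀ x, w x = f (fun i => x (Fin.castAdd h i)) + g (fun j => x (Fin.natAdd k j)))
    (x : Fin (k + h) → ℝ) :
    (hessMat w x).det = (hessMat f (fun i => x (Fin.castAdd h i))).det *
      (hessMat g (fun j => x (Fin.natAdd k j))).det := by
  rw [← Matrix.det_submatrix_equiv_self finSumFinEquiv, hessMat_separated hf hg hw,
    Matrix.det_fromBlocks_zero₂₁]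

end Separated

/-- Splitting a vector into its first `k` and last `h` coordinates. -/
def splitHomeo (k h : ℕ) : (Fin (k + h) → ℝ) ≃ₜ (Fin k → ℝ) × (Fin h → ℝ) :=
  (Fin.appendHomeomorph k h).symm

lemma range_gradMap_separated {k h : ℕ} {f : (Fin k → ℝ) → ℝ} {g : (Fin h → ℝ) → ℝ}
    {w : (Fin (k + h) → ℝ) → ℝ} (hf : Differentiable ℝ f) (hg : Differentiable ℝ g)
    (hw : ∀ x, w x = f (fun i => x (Fin.castAdd h i)) + g (fun j => x (Fin.natAdd k j))) :
    Set.range (gradMap w) =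
      splitHomeo k h ⁻¹' (Set.range (gradMap f) ×ˢ Set.range (gradMap g)) := by
  have key (x : Fin (k + h) → ℝ) : splitHomeo k h (gradMap w x) =
      (gradMap f (splitHomeo k h x).1, gradMap g (splitHomeo k h x).2) :=
    Prod.ext (funext fun i => pderivAt_castAdd hf hg hw i x)
      (funext fun j => pderivAt_natAdd hf hg hw j x)
  ext z
  constructor
  · rintro ⟨x, rfl⟩
    rw [Set.mem_preimage, key]
    exact ⟨⟨_, rfl⟩, ⟨_, rfl⟩⟩
  · rintro ⟨⟨x, hx⟩, ⟨y, hy⟩⟩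
    refine ⟨(splitHomeo k h).symm (x, y), (splitHomeo k h).injective ?_⟩
    rw [key, Homeomorph.apply_symm_apply, hx, hy]

/-- The index set of the sum consists of the concatenations `(I, J)`, with coefficient
`a_I * a_J`. -/
lemma IsTypeStar.separated {k h : ℕ} {u : (Fin k → ℝ) → ℝ} {v : (Fin h → ℝ) → ℝ}
    {s : Finset (Fin k → ℕ)} {a : (Fin k → ℕ) → ℝ} {t : Finset (Fin h → ℕ)}
    {b : (Fin h → ℕ) → ℝ} (hu : IsTypeStar u s a) (hv : IsTypeStar v t b)
    {w : (Fin (k + h) → ℝ) → ℝ}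
    (hw : ∀ x, w x = u (fun i => x (Fin.castAdd h i)) + v (fun j => x (Fin.natAdd k j))) :
    IsTypeStar w ((s ×ˢ t).map (Fin.appendEquiv k h).toEmbedding)
      (fun K => a (fun i => K (Fin.castAdd h i)) * b (fun j => K (Fin.natAdd k j))) := by
  refine ⟨fun K hK => ?_, fun K hK => ?_, fun K hK => ?_, fun x => ?_⟩
  · rw [Fin.sum_univ_add] at hK
    rw [Finset.mem_map]
    exact ⟨(fun i => K (Fin.castAdd h i), fun j => K (Fin.natAdd k j)),
      Finset.mem_product.2 ⟨hu.1 _ (by dsimp only; omega), hv.1 _ (by dsimp only; omega)⟩, Fin.append_castAdd_natAdd⟩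
  · obtain ⟨⟨I, J⟩, hIJ, rfl⟩ := Finset.mem_map.1 hK
    rw [Finset.mem_product] at hIJ
    simpa [Fin.appendEquiv] using mul_pos (hu.2.1 I hIJ.1) (hv.2.1 J hIJ.2)
  · rw [Fin.sum_univ_add] at hK
    simp only []
    rw [hu.2.2.1 _ (by omega), hv.2.2.1 _ (by omega), one_mul]
  · rw [hw, hu.2.2.2, hv.2.2.2, Fin.sum_univ_add, Finset.sum_map, Finset.sum_product]
    have hprod := Real.log_mul (hu.sum_pos fun i => x (Fin.castAdd h i)).ne'
      (hv.sum_pos fun j => x (Fin.natAdd k j)).ne'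
    rw [Finset.sum_mul_sum] at hprod
    have hsum : ∀ I ∈ s, ∀ J ∈ t,
        a I * Real.exp (∑ i, (I i : ℝ) * x (Fin.castAdd h i)) *
          (b J * Real.exp (∑ j, (J j : ℝ) * x (Fin.natAdd k j))) =
        a I * b J * Real.exp (∑ l, ((Fin.append I J l : ℕ) : ℝ) * x l) := by
      intro I _ J _
      rw [Fin.sum_univ_add, Real.exp_add]
      simp only [Fin.append_left, Fin.append_right]
      ring
    rw [Finset.sum_congr rfl fun I hI => Finset.sum_congr rfl (hsum I hI)] at hprod
    simp only [Fin.appendEquiv, Equiv.coe_toEmbedding, Equiv.coe_fn_mk, Fin.append_left,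
      Fin.append_right]
    rw [hprod]
    ring

/-- the sum `w(x,y) = u(x) + v(y)` of two solutions of type (★) of the
Monge–Ampère equation is again a solution of type (★), and its associated polytope is
the cartesian product of the two associated polytopes. -/
theorem stmt4 {k h : ℕ}
    (u : (Fin k → ℝ) → ℝ) (v : (Fin h → ℝ) → ℝ)
    (𝓘u : Finset (Fin k → ℕ)) (au : (Fin k → ℕ) → ℝ)
    (𝓘v : Finset (Fin h → ℕ)) (av : (Fin h → ℕ) → ℝ)
    (hu : IsTypeStar u 𝓘u au) (hv : IsTypeStar v 𝓘v av)
    (hMAu : SatisfiesMA u) (hMAv : SatisfiesMA v)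
    (w : (Fin (k + h) → ℝ) → ℝ)
    (hw : ∀ x, w x = u (fun i => x (Fin.castAdd h i)) + v (fun j => x (Fin.natAdd k j))) :
    (∃ (𝓘 : Finset (Fin (k + h) → ℕ)) (a : (Fin (k + h) → ℕ) → ℝ), IsTypeStar w 𝓘 a) ∧
    SatisfiesMA w ∧
    closure (Set.range (gradMap w)) =
      {z : Fin (k + h) → ℝ |
        (fun i => z (Fin.castAdd h i)) ∈ closure (Set.range (gradMap u)) ∧
        (fun j => z (Fin.natAdd k j)) ∈ closure (Set.range (gradMap v))} := by
  have hu2 := hu.contDiff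
  have hv2 := hv.contDiff
  refine ⟨⟨_, _, hu.separated hv hw⟩, fun x => ?_, ?_⟩
  · rw [det_hessMat_separated hu2 hv2 hw, hMAu, hMAv, hw, neg_add, Real.exp_add]
  · rw [range_gradMap_separated (hu2.differentiable (by norm_num))
      (hv2.differentiable (by norm_num)) hw, ← Homeomorph.preimage_closure, closure_prod_eq]
    rfl
end

section
/- Let n ≥ 1 and let u : ℝⁿ → ℝ be a function of type (★) satisfying det D²u = e^{−u} on ℝⁿ. Then the associated polytope 𝒫 (the closure of Du(ℝⁿ)) has its barycenter at the origin; that is, for every α ∈ {1,…,n}, ∫_𝒫 y_α dy₁…dyₙ = 0. -/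
/-!
The barycenter vanishes by the change of variables `y = Du(x)`:
since `det D²u = e^{−u}`,
`∫_𝒫 y_α dy = ∫ ∂_α u · e^{−u} dx = −∫ ∂_α (e^{−u}) dx = 0`.

Three facts make this rigorous.

* `Du` is injective (`TypeStar.gradMap_injective`). It is a weighted mean of the `I − (1,…,1)` with
  weights proportional to `a_I e^{I·x}`, and it is strictly monotone by a Chebyshev-type
  symmetrization, because `𝓘` contains `0` and all the `e_i`.
* `𝒫` and `Du(ℝⁿ)` differ by a null set (`TypeStar.closure_range_ae_eq`). The range of `Du` lies in
  the Newton polytope of `e^u`, i.e. the convex hull of the `I − (1,…,1)`, and contains its interior: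
  for `y` in the interior, `x ↦ u x − y·x` is coercive, and at a minimum `Du = y`. The frontier of
  a convex set is null.
* The last integral vanishes without any decay estimate: it is enough that `e^{−u}` and
  `∂_α u · e^{−u}` are integrable, which the same change of variables deduces from the boundedness
  of the polytope.
-/

open Real Filter MeasureTheory

namespace TypeStar

/-! ### The gradient as a weighted mean -/

/-- The linear form `x ↦ I·x`. -/
noncomputable def lin {n : ℕ} (I : Fin n → ℕ) : (Fin n → ℝ) →L[ℝ] ℝ :=
  ∑ i, (I i : ℝ) • ContinuousLinearMap.proj (R := ℝ) (φ := fun _ : Fin n => ℝ) i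

/-- The polynomial part `∑_{I ∈ 𝓘} a_I e^{I·x}` of a function of type (★). -/
noncomputable def S {n : ℕ} (𝓘 : Finset (Fin n → ℕ)) (a : (Fin n → ℕ) → ℝ)
    (x : Fin n → ℝ) : ℝ :=
  ∑ I ∈ 𝓘, a I * Real.exp (lin I x)

/-- The point `I − (1,…,1)`: the exponent vector of the summand of `e^u` indexed by `I`. -/
def pt {n : ℕ} (I : Fin n → ℕ) : Fin n → ℝ := fun i => (I i : ℝ) - 1

/-- The Newton polytope of `e^u`: the convex hull of the points `I − (1,…,1)`, `I ∈ 𝓘`. -/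
def newton {n : ℕ} (𝓘 : Finset (Fin n → ℕ)) : Set (Fin n → ℝ) :=
  convexHull ℝ (pt '' (𝓘 : Set (Fin n → ℕ)))

variable {n : ℕ} {u : (Fin n → ℝ) → ℝ} {𝓘 : Finset (Fin n → ℕ)} {a : (Fin n → ℕ) → ℝ}

lemma lin_apply (I : Fin n → ℕ) (x : Fin n → ℝ) : lin I x = ∑ i, (I i : ℝ) * x i := by
  simp [lin]

lemma S_pos (hu : IsTypeStar u 𝓘 a) (x : Fin n → ℝ) : 0 < S 𝓘 a x :=
  Finset.sum_pos (fun I hI => mul_pos (hu.2.1 I hI) (Real.exp_pos _))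
    ⟨0, hu.1 0 (by simp)⟩

lemma u_eq (hu : IsTypeStar u 𝓘 a) : u = fun x => Real.log (S 𝓘 a x) - ∑ i, x i := by
  funext x
  rw [hu.2.2.2 x]
  simp only [S, lin_apply]

lemma contDiff_u (hu : IsTypeStar u 𝓘 a) : ContDiff ℝ 2 u := by
  rw [u_eq hu]
  refine ContDiff.sub (ContDiff.log ?_ fun x => (S_pos hu x).ne') (by fun_prop)
  unfold S
  fun_prop

lemma hasFDerivAt_u (hu : IsTypeStar u 𝓘 a) (x : Fin n → ℝ) :
    HasFDerivAt u ((S 𝓘 a x)⁻¹ • (∑ I ∈ 𝓘, a I • Real.exp (lin I x) • lin I) -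
      ∑ i, ContinuousLinearMap.proj (R := ℝ) (φ := fun _ : Fin n => ℝ) i) x := by
  rw [u_eq hu]
  refine HasFDerivAt.sub (HasFDerivAt.log ?_ (S_pos hu x).ne') ?_
  · unfold S
    exact HasFDerivAt.fun_sum fun I _ => ((lin I).hasFDerivAt.exp).const_mul (a I)
  · exact HasFDerivAt.fun_sum fun i _ =>
      (ContinuousLinearMap.proj (R := ℝ) (φ := fun _ : Fin n => ℝ) i).hasFDerivAt

lemma gradMap_apply (hu : IsTypeStar u 𝓘 a) (x : Fin n → ℝ) (i : Fin n) :
    gradMap u x i = (∑ I ∈ 𝓘, a I * Real.exp (lin I x) * I i) / S 𝓘 a x - 1 := by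
  rw [gradMap, pderivAt, (hasFDerivAt_u hu x).fderiv]
  simp [lin_apply, Pi.single_apply, div_eq_inv_mul, mul_assoc]

/-- Pairing the gradient with a vector `v`: the mean of `I·v` for the weights `a_I e^{I·x}`,
shifted by `∑ v_i`. -/
lemma sum_gradMap_mul (hu : IsTypeStar u 𝓘 a) (x v : Fin n → ℝ) :
    ∑ i, gradMap u x i * v i =
      (∑ I ∈ 𝓘, a I * Real.exp (lin I x) * lin I v) / S 𝓘 a x - ∑ i, v i := by
  simp only [gradMap_apply hu, sub_mul, one_mul, Finset.sum_sub_distrib, lin_apply,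
    Finset.mul_sum, Finset.sum_div, Finset.sum_mul]
  rw [Finset.sum_comm]
  congr 1
  refine Finset.sum_congr rfl fun I _ => Finset.sum_congr rfl fun i _ => ?_
  ring

/-! ### Injectivity of the gradient -/

lemma exp_sub_mul_nonneg (s t : ℝ) : 0 ≤ (Real.exp s - Real.exp t) * (s - t) := by
  rcases le_total s t with h | h
  · exact mul_nonneg_of_nonpos_of_nonpos (by simpa using h) (by linarith)
  · exact mul_nonneg (by simpa using h) (by linarith)

/-- The gradient of `u` is injective: with `v = y − x` and weights `p_I = a_I e^{I·x}`, the
quantity `(Du(y) − Du(x))·v` is a positive multiple of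
`∑_{I,J} p_I p_J (e^{I·v} − e^{J·v}) (I·v − J·v)`, whose terms are nonnegative. If the sum vanishes
then `e_i·v = 0·v` for all `i`, so that `v = 0`. -/
lemma gradMap_injective (hu : IsTypeStar u 𝓘 a) : Function.Injective (gradMap u) := by
  intro x y hxy
  set v := y - x with hv
  have hp : ∀ I, a I * Real.exp (lin I y) = a I * Real.exp (lin I x) * Real.exp (lin I v) := by
    intro I
    rw [mul_assoc, ← Real.exp_add, ← map_add, hv, add_sub_cancel]
  set p : (Fin n → ℕ) → ℝ := fun I => a I * Real.exp (lin I x) with hpdef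
  have hppos : ∀ I ∈ 𝓘, 0 < p I := fun I hI => mul_pos (hu.2.1 I hI) (Real.exp_pos _)
  have h1 : (∑ I ∈ 𝓘, p I * lin I v) / S 𝓘 a x =
      (∑ I ∈ 𝓘, p I * Real.exp (lin I v) * lin I v) / S 𝓘 a y := by
    have hx := sum_gradMap_mul hu x v
    have hy := sum_gradMap_mul hu y v
    rw [hxy] at hx
    simp only [hp] at hy
    linarith
  rw [div_eq_div_iff (S_pos hu x).ne' (S_pos hu y).ne'] at h1
  have hSx : S 𝓘 a x = ∑ I ∈ 𝓘, p I := rfl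
  have hSy : S 𝓘 a y = ∑ I ∈ 𝓘, p I * Real.exp (lin I v) :=
    Finset.sum_congr rfl fun I _ => hp I
  rw [hSx, hSy] at h1
  have h0 : ∑ I ∈ 𝓘, ∑ J ∈ 𝓘,
      p I * p J * ((Real.exp (lin I v) - Real.exp (lin J v)) * (lin I v - lin J v)) = 0 := by
    have e : ∑ I ∈ 𝓘, ∑ J ∈ 𝓘,
        p I * p J * ((Real.exp (lin I v) - Real.exp (lin J v)) * (lin I v - lin J v)) =
        (∑ I ∈ 𝓘, p I * Real.exp (lin I v) * lin I v) * (∑ J ∈ 𝓘, p J)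
        + (∑ I ∈ 𝓘, p I) * (∑ J ∈ 𝓘, p J * Real.exp (lin J v) * lin J v)
        - (∑ I ∈ 𝓘, p I * lin I v) * (∑ J ∈ 𝓘, p J * Real.exp (lin J v))
        - (∑ I ∈ 𝓘, p I * Real.exp (lin I v)) * (∑ J ∈ 𝓘, p J * lin J v) := by
      simp only [Finset.sum_mul_sum, ← Finset.sum_add_distrib, ← Finset.sum_sub_distrib]
      refine Finset.sum_congr rfl fun I _ => Finset.sum_congr rfl fun J _ => ?_
      ring
    rw [e]
    linarith
  have hterm : ∀ I ∈ 𝓘, ∀ J ∈ 𝓘, lin I v = lin J v := by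
    have hnn : ∀ I ∈ 𝓘, ∀ J ∈ 𝓘, 0 ≤ p I * p J *
        ((Real.exp (lin I v) - Real.exp (lin J v)) * (lin I v - lin J v)) := fun I hI J hJ =>
      mul_nonneg (mul_pos (hppos I hI) (hppos J hJ)).le (exp_sub_mul_nonneg _ _)
    intro I hI J hJ
    have h2 := (Finset.sum_eq_zero_iff_of_nonneg fun I hI =>
      Finset.sum_nonneg (hnn I hI)).1 h0 I hI
    have h3 := (Finset.sum_eq_zero_iff_of_nonneg (hnn I hI)).1 h2 J hJ
    rcases mul_eq_zero.1 h3 with h | h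
    · exact absurd h (mul_pos (hppos I hI) (hppos J hJ)).ne'
    · rcases mul_eq_zero.1 h with h | h
      · exact Real.exp_injective (sub_eq_zero.1 h)
      · exact sub_eq_zero.1 h
  have hv0 : v = 0 := by
    funext i
    have := hterm (Pi.single i 1) (hu.1 _ (by simp)) 0 (hu.1 0 (by simp))
    simpa [lin_apply, Pi.single_apply] using this
  exact (sub_eq_zero.1 (hv ▸ hv0)).symm

/-! ### The range of the gradient -/

lemma gradMap_mem_newton (hu : IsTypeStar u 𝓘 a) (x : Fin n → ℝ) :
    gradMap u x ∈ newton 𝓘 := by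
  have hS := S_pos hu x
  have e : gradMap u x = ∑ I ∈ 𝓘, (a I * Real.exp (lin I x) / S 𝓘 a x) • pt I := by
    funext i
    rw [gradMap_apply hu]
    simp only [Finset.sum_apply, Pi.smul_apply, pt, smul_eq_mul, mul_sub, mul_one,
      Finset.sum_sub_distrib, ← Finset.sum_div]
    congr 1
    · rw [Finset.sum_div]
      exact Finset.sum_congr rfl fun I _ => by ring
    · exact (div_self hS.ne').symm
  rw [e]
  refine (convex_convexHull ℝ _).sum_mem
    (fun I hI => div_nonneg (mul_pos (hu.2.1 I hI) (Real.exp_pos _)).le hS.le) ?_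
    fun I hI => subset_convexHull ℝ _ ⟨I, hI, rfl⟩
  rw [← Finset.sum_div]
  exact div_self hS.ne'

lemma isCompact_newton : IsCompact (newton 𝓘) :=
  ((𝓘.finite_toSet).image _).isCompact_convexHull ℝ

/-- If the closed ball of radius `r` about `y` lies in the polytope, then
`max_I (I − (1,…,1) − y)·x ≥ r ‖x‖`. -/
lemma exists_pt_ge {y : Fin n → ℝ} {r : ℝ} (hr : 0 < r)
    (hb : Metric.closedBall y r ⊆ newton 𝓘) (x : Fin n → ℝ) :
    ∃ I ∈ 𝓘, r * ‖x‖ ≤ ∑ i, (pt I i - y i) * x i := by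
  by_contra! hcon
  -- Moving from `y` by `r` in the direction of the signs of `x` stays in the sup-norm ball and
  -- increases the pairing with `x` by `r ∑ |x_i| ≥ r ‖x‖`.
  set z : Fin n → ℝ := fun i => y i + r * SignType.sign (x i) with hz
  have hzmem : z ∈ newton 𝓘 := by
    apply hb
    rw [Metric.mem_closedBall, dist_pi_le_iff hr.le]
    intro i
    rw [Real.dist_eq, hz]
    have : |((SignType.sign (x i) : SignType) : ℝ)| ≤ 1 := by
      rcases lt_trichotomy (x i) 0 with h | h | h <;> simp [h]
    simpa [abs_mul, abs_of_pos hr] using mul_le_of_le_one_right hr.le this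
  -- By assumption all the points spanning the polytope lie in this half-space.
  have hsub : newton 𝓘 ⊆ {w | ∑ i, x i * w i < r * ‖x‖ + ∑ i, y i * x i} := by
    refine convexHull_min ?_ (convex_halfSpace_lt ?_ _)
    · rintro _ ⟨I, hI, rfl⟩
      have := hcon I hI
      simp only [sub_mul, Finset.sum_sub_distrib] at this
      simp only [Set.mem_ofPred_eq, mul_comm (x _)]
      linarith
    · constructor
      · intro v w
        simp [mul_add, Finset.sum_add_distrib]
      · intro c v
        simp [Finset.mul_sum, mul_left_comm]
  have h1 := hsub hzmem
  have h2 : ∑ i, x i * z i = r * ∑ i, |x i| + ∑ i, y i * x i := by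
    rw [Finset.mul_sum, ← Finset.sum_add_distrib]
    refine Finset.sum_congr rfl fun i _ => ?_
    have := self_mul_sign (x i)
    rw [hz, ← this]
    ring
  have h3 : ‖x‖ ≤ ∑ i, |x i| :=
    (pi_norm_le_iff_of_nonneg (Finset.sum_nonneg fun i _ => abs_nonneg _)).2 fun i =>
      Finset.single_le_sum (f := fun i => |x i|) (fun i _ => abs_nonneg _) (Finset.mem_univ i)
  have h4 := mul_le_mul_of_nonneg_left h3 hr.le
  rw [Set.mem_ofPred_eq, h2] at h1
  linarith

/-- Every interior point `y` of the polytope is a gradient: `x ↦ u x − y·x` is coercive, hence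
attains its minimum. -/
lemma interior_newton_subset (hu : IsTypeStar u 𝓘 a) :
    interior (newton 𝓘) ⊆ Set.range (gradMap u) := by
  intro y hy
  obtain ⟨r, hr, hb⟩ := Metric.nhds_basis_closedBall.mem_iff.1 (mem_interior_iff_mem_nhds.1 hy)
  obtain ⟨I₀, hI₀mem, hI₀⟩ := 𝓘.exists_min_image a ⟨0, hu.1 0 (by simp)⟩
  have ha₀ : 0 < a I₀ := hu.2.1 I₀ hI₀mem
  have hlow : ∀ x, r * ‖x‖ + Real.log (a I₀) ≤ u x - ∑ i, y i * x i := by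
    intro x
    obtain ⟨I, hI, hIx⟩ := exists_pt_ge hr hb x
    have h1 : Real.log (a I₀) + lin I x ≤ Real.log (S 𝓘 a x) := by
      rw [← Real.log_exp (lin I x), ← Real.log_mul ha₀.ne' (Real.exp_pos _).ne']
      refine Real.log_le_log (mul_pos ha₀ (Real.exp_pos _)) ?_
      refine (mul_le_mul_of_nonneg_right (hI₀ I hI) (Real.exp_pos _).le).trans ?_
      exact Finset.single_le_sum (f := fun I => a I * Real.exp (lin I x))
        (fun J hJ => (mul_pos (hu.2.1 J hJ) (Real.exp_pos _)).le) hI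
    have h2 : u x = Real.log (S 𝓘 a x) - ∑ i, x i := congrFun (u_eq hu) x
    simp only [pt, sub_mul, one_mul, Finset.sum_sub_distrib, ← lin_apply] at hIx
    linarith
  have hcoer : Tendsto (fun x => u x - ∑ i, y i * x i) (cocompact (Fin n → ℝ)) atTop :=
    tendsto_atTop_mono hlow (tendsto_atTop_add_const_right _ _
      ((tendsto_norm_cocompact_atTop (E := Fin n → ℝ)).const_mul_atTop hr))
  obtain ⟨x, hx⟩ := ((contDiff_u hu).continuous.sub
    (by fun_prop : Continuous fun x : Fin n → ℝ => ∑ i, y i * x i)).exists_forall_le hcoer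
  refine ⟨x, ?_⟩
  have hd : HasFDerivAt (fun x => u x - ∑ i, y i * x i) (fderiv ℝ u x -
      ∑ i, y i • ContinuousLinearMap.proj (R := ℝ) (φ := fun _ : Fin n => ℝ) i) x :=
    (hasFDerivAt_u hu x).differentiableAt.hasFDerivAt.sub (HasFDerivAt.fun_sum fun i _ =>
      (ContinuousLinearMap.proj (R := ℝ) (φ := fun _ : Fin n => ℝ) i).hasFDerivAt.const_mul (y i))
  have h0 := IsLocalMin.hasFDerivAt_eq_zero (Filter.Eventually.of_forall hx) hd
  funext i
  have h1 := congrArg (fun L : (Fin n → ℝ) →L[ℝ] ℝ => L (Pi.single i 1)) h0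
  replace h1 : gradMap u x i - y i = 0 := by
    simpa [Pi.single_apply, gradMap, pderivAt] using h1
  exact sub_eq_zero.1 h1

/-- Both sets lie between the interior of the polytope and the polytope itself. -/
lemma closure_range_ae_eq (hu : IsTypeStar u 𝓘 a) :
    closure (Set.range (gradMap u)) =ᵐ[volume] Set.range (gradMap u) := by
  have hsub : closure (Set.range (gradMap u)) ⊆ newton 𝓘 :=
    closure_minimal (by rintro _ ⟨x, rfl⟩; exact gradMap_mem_newton hu x)
      isCompact_newton.isClosed
  refine (LE.le.eventuallyLE ?_).antisymm ?_ |>.symm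
  · exact subset_closure
  · rw [ae_le_set]
    refine measure_mono_null ?_ ((convex_convexHull ℝ (pt '' (𝓘 : Set (Fin n → ℕ)))).addHaar_frontier
      volume)
    rintro y ⟨hy, hy'⟩
    exact ⟨subset_closure (hsub hy), fun h => hy' (interior_newton_subset hu h)⟩

/-! ### The Jacobian of the gradient -/

lemma differentiable_gradMap (hu : IsTypeStar u 𝓘 a) : Differentiable ℝ (gradMap u) := by
  rw [differentiable_pi]
  intro i
  have h : ContDiff ℝ 1 (fderiv ℝ u) := (contDiff_u hu).fderiv_right (by norm_num)
  exact (h.differentiable (by norm_num)).clm_apply (differentiable_const _)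

/-- The Jacobian matrix of `Du` is the transpose of `hessMat u`. -/
lemma det_fderiv_gradMap (hu : IsTypeStar u 𝓘 a) (x : Fin n → ℝ) :
    (fderiv ℝ (gradMap u) x).det = (hessMat u x).det := by
  rw [ContinuousLinearMap.det, ← LinearMap.det_toMatrix', ← Matrix.det_transpose]
  congr 1
  ext i j
  have := (hasFDerivAt_pi'.1 (differentiable_gradMap hu x).hasFDerivAt j).fderiv
  have h : (fderiv ℝ (pderivAt u j) x) (Pi.single i 1) =
      (fderiv ℝ (gradMap u) x) (Pi.single i 1) j := congrArg (fun L => L (Pi.single i 1)) this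
  simpa [LinearMap.toMatrix'_apply, hessMat, pderivAt] using h.symm

end TypeStar

/-- the polytope associated to a type (★) solution of `det D²u = e^{−u}`
has barycenter at the origin: `∫_𝒫 y_α dy = 0` for every `α`. -/
theorem stmt6 {n : ℕ} (hn : 1 ≤ n) (u : (Fin n → ℝ) → ℝ)
    (𝓘 : Finset (Fin n → ℕ)) (a : (Fin n → ℕ) → ℝ)
    (hu : IsTypeStar u 𝓘 a) (hMA : SatisfiesMA u) :
    ∀ α : Fin n, ∫ y in closure (Set.range (gradMap u)), y α = 0 := by
  intro α
  have hinj : Set.InjOn (gradMap u) Set.univ := (TypeStar.gradMap_injective hu).injOn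
  have hder : ∀ x ∈ Set.univ,
      HasFDerivWithinAt (gradMap u) (fderiv ℝ (gradMap u) x) Set.univ x := fun x _ =>
    (TypeStar.differentiable_gradMap hu x).hasFDerivAt.hasFDerivWithinAt
  have hdet : ∀ x, |(fderiv ℝ (gradMap u) x).det| = Real.exp (-(u x)) := fun x => by
    rw [TypeStar.det_fderiv_gradMap hu, hMA x, Real.abs_exp]
  -- A continuous `g` is bounded on the polytope, so `g ∘ Du` is integrable against `e^{−u} dx`.
  have hint : ∀ g : (Fin n → ℝ) → ℝ, Continuous g →
      Integrable fun x => Real.exp (-(u x)) * g (gradMap u x) := by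
    intro g hg
    have h1 : IntegrableOn g (gradMap u '' Set.univ) volume := by
      refine (hg.continuousOn.integrableOn_compact (TypeStar.isCompact_newton (𝓘 := 𝓘))).mono_set ?_
      rintro _ ⟨x, -, rfl⟩
      exact TypeStar.gradMap_mem_newton hu x
    rw [integrableOn_image_iff_integrableOn_abs_det_fderiv_smul volume MeasurableSet.univ hder
      hinj] at h1
    simpa only [hdet, smul_eq_mul, integrableOn_univ] using h1
  have h1 : Integrable fun x => Real.exp (-(u x)) := by
    simpa using hint (fun _ => 1) continuous_const
  have h2 := hint (fun y => y α) (continuous_apply α)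
  rw [setIntegral_congr_set (TypeStar.closure_range_ae_eq hu), ← Set.image_univ,
    integral_image_eq_integral_abs_det_fderiv_smul volume MeasurableSet.univ hder hinj]
  simp only [hdet, smul_eq_mul, Measure.restrict_univ]
  have hd : ∀ x, HasFDerivAt (fun x => Real.exp (-(u x))) (Real.exp (-(u x)) • -fderiv ℝ u x) x :=
    fun x => ((TypeStar.hasFDerivAt_u hu x).differentiableAt.hasFDerivAt.neg).exp
  have hfd : ∀ x, fderiv ℝ (fun x => Real.exp (-(u x))) x (Pi.single α 1) =
      -(Real.exp (-(u x)) * gradMap u x α) := fun x => by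
    rw [(hd x).fderiv]
    simp [gradMap, pderivAt]
  -- Integration by parts against the constant function `1`, which needs no decay at infinity.
  have hparts := integral_mul_fderiv_eq_neg_fderiv_mul_of_integrable (μ := volume)
    (f := fun _ : Fin n → ℝ => (1 : ℝ)) (g := fun x => Real.exp (-(u x))) (v := Pi.single α 1)
    (by simp) (by simp only [hfd, one_mul]; exact h2.neg) (by simpa using h1)
    (fun x _ => differentiableAt_const _) (fun x _ => (hd x).differentiableAt)
  simpa [hfd, integral_neg] using hparts
end

section
/- Let n ≥ 1 and let u : ℝⁿ → ℝ be a function of type (★) satisfying det D²u = e^{−u} on ℝⁿ. Then the associated polytope 𝒫 (the closure of Du(ℝⁿ)) is a reflexive lattice polytope: all its vertices lie in ℤⁿ, the origin 𝟎 is an interior point of 𝒫, and there exist finitely many vectors v₁,…,v_m ∈ ℤⁿ such that 𝒫 = {y ∈ ℝⁿ : ⟨v_j, y⟩ ≤ 1 for all j = 1,…,m}. -/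
/-!
Write the points of `𝓘` as frequencies `q_I ∈ ℝⁿ`, put `f = ∑ a_I e^{q_I · x}` and `p_I = q_I - 1`,
where `1 = (1,…,1)`.

*The polytope.* The gradient of `u` is a convex combination of the `p_I` with positive weights, so
the polytope is contained in `P = conv {p_I}`. Conversely, for `y ∈ P` the function `u(x) - y · x`
is bounded below; minimising it after adding `ε |x|²` gives points where `Du` is arbitrarily close
to `y`. Hence the closure of the image of `Du` is `P` (`closure_range_gradMap`), and its vertices are
among the integral points `p_I`.

*The equation.* By a Schur complement, `f^{n+1} det D²u` is the determinant of the weighted Gram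
matrix of the vectors `(1, q_I)`, and the Cauchy-Binet formula (`gram_det`) turns the equation
`det D²u = e^{-u}` into
`∑_φ a_φ det(1, q_φ)² e^{(∑ q_φ) · x} = (n+1)! e^{1 · x} f^n`,
the sum being over `(n+1)`-tuples `φ` in `𝓘`. All coefficients are nonnegative and exponentials with
distinct frequencies are linearly independent, so both sides involve the same frequencies
(`support_identity`): the sums of `n+1` affinely independent points of `q` are exactly the sums
`1 + q_{ψ 1} + ⋯ + q_{ψ n}`.

*The origin is interior.* Otherwise some `z ≠ 0` satisfies `z · p_I ≤ 0` for all `I`. Let `I` maximise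
`z · p_I` and write `1 + n q_I` as a sum of `n+1` affinely independent points. Comparing values
of `z`, all those points maximise `z`, so `z` is constant on an affinely spanning set, a contradiction
(`exists_dotProduct_pos`).

*Reflexivity.* The polar `K = {w | ∀ I, w · p_I ≤ 1}` is compact, and by Hahn-Banach and Krein-Milman
`P` is cut out by the inequalities `w · y ≤ 1` with `w` an extreme point of `K`. Such a `w` takes the
value `1` at `n` linearly independent points `p_{F k}`. If `w · p_J ≠ 1`, then `J` and the `F k`
are affinely independent, so `∑ q_{F k} + q_J = 1 + ∑ q_{ψ k}` for some `ψ`, which for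
`λ_I = 1 - w · p_I ≥ 0` reads `λ_J = 1 + ∑ λ_{ψ k}` (`facet_relation`). By induction on `λ_J`, all
`λ_I` are integers (`facet_integral`); since `0` and the unit vectors are among the `q_I`, `w` is
integral. Finally `K` contains only finitely many integral vectors.
-/

open Real Filter MeasureTheory

/-! ### Cauchy-Binet and exponential sums -/

/-- A symmetric form of the Cauchy-Binet formula, with the sum running over all tuples of indices
instead of subsets. Expanding by multilinearity in the rows gives one factor `det(b_φ)`; averaging
over permutations of the tuple produces the second. -/
theorem gram_det {m ι : Type*} [Fintype m] [DecidableEq m] [Fintype ι]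
    (w : ι → ℝ) (b : ι → m → ℝ) :
    ((Fintype.card m).factorial : ℝ) *
        (Matrix.of fun i j => ∑ I, w I * b I i * b I j : Matrix m m ℝ).det =
      ∑ φ : m → ι, (∏ k, w (φ k)) * (Matrix.of fun k => b (φ k) : Matrix m m ℝ).det ^ 2 := by
  classical
  have h1 : (Matrix.of fun i j => ∑ I, w I * b I i * b I j : Matrix m m ℝ).det =
      ∑ φ : m → ι, (∏ k, w (φ k)) * (∏ k, b (φ k) k) *
        (Matrix.of fun k => b (φ k) : Matrix m m ℝ).det := by
    have : (Matrix.of fun i j => ∑ I, w I * b I i * b I j : Matrix m m ℝ) =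
        fun i => ∑ I, (w I * b I i) • b I := by
      ext i j
      simp [Finset.sum_apply]
    rw [this]
    have h2 := (Matrix.detRowAlternating (R := ℝ) (n := m)).toMultilinearMap.map_sum
      (fun i (I : ι) => (w I * b I i) • b I)
    refine h2.trans (Finset.sum_congr rfl fun φ _ => ?_)
    refine ((Matrix.detRowAlternating (R := ℝ) (n := m)).toMultilinearMap.map_smul_univ
      (fun k => w (φ k) * b (φ k) k) (fun k => b (φ k))).trans ?_
    rw [Finset.prod_mul_distrib]
    rfl
  -- Replacing `φ` by `φ ∘ σ` only changes the determinant by the sign of `σ`.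
  have h2 : ∀ σ : Equiv.Perm m,
      (Matrix.of fun i j => ∑ I, w I * b I i * b I j : Matrix m m ℝ).det =
      ∑ φ : m → ι, (∏ k, w (φ k)) * (((Equiv.Perm.sign σ : ℤ) : ℝ) * ∏ k, b (φ (σ k)) k) *
        (Matrix.of fun k => b (φ k) : Matrix m m ℝ).det := by
    intro σ
    rw [h1, ← (Equiv.arrowCongr σ.symm (Equiv.refl ι)).sum_comp]
    refine Finset.sum_congr rfl fun φ _ => ?_
    have h3 : (Matrix.of fun k => b (φ (σ k)) : Matrix m m ℝ).det =
        ((Equiv.Perm.sign σ : ℤ) : ℝ) * (Matrix.of fun k => b (φ k) : Matrix m m ℝ).det := by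
      rw [← Matrix.det_permute]; rfl
    have h4 : ∏ k, w (φ (σ k)) = ∏ k, w (φ k) := Equiv.prod_comp σ (fun k => w (φ k))
    simp only [Equiv.arrowCongr_apply, Equiv.symm_symm, Equiv.coe_refl, Function.comp_apply, id]
    rw [h3, h4]; ring
  have h5 : ((Fintype.card m).factorial : ℝ) *
        (Matrix.of fun i j => ∑ I, w I * b I i * b I j : Matrix m m ℝ).det =
      ∑ _σ : Equiv.Perm m, (Matrix.of fun i j => ∑ I, w I * b I i * b I j : Matrix m m ℝ).det := by
    simp [Fintype.card_perm]
  rw [h5, Finset.sum_congr rfl fun σ _ => h2 σ, Finset.sum_comm]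
  refine Finset.sum_congr rfl fun φ _ => ?_
  rw [← Finset.sum_mul, ← Finset.mul_sum, sq, mul_assoc]
  congr 2
  rw [Matrix.det_apply']
  rfl

theorem sum_fiberwise_exp {n : ℕ} {R : Type*} [Fintype R] (d : R → ℝ) (F : R → Fin n → ℝ)
    (x : Fin n → ℝ) (U : Finset (Fin n → ℝ)) (hU : ∀ r, F r ∈ U) :
    ∑ e ∈ U, (∑ r, if F r = e then d r else 0) * Real.exp (e ⬝ᵥ x) =
      ∑ r, d r * Real.exp (F r ⬝ᵥ x) := by
  simp_rw [Finset.sum_mul]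
  rw [Finset.sum_comm]
  refine Finset.sum_congr rfl fun r _ => ?_
  simp [ite_mul, hU]

/-- If two exponential sums agree and the left one has nonnegative coefficients, then each
frequency that really occurs on the left also occurs on the right. Nonnegativity rules out
cancellation between terms with the same frequency; the rest is Dedekind's independence of
characters. -/
theorem exp_support {n : ℕ} {S T : Type*} [Fintype S] [Fintype T]
    (c : S → ℝ) (E : S → Fin n → ℝ) (c' : T → ℝ) (E' : T → Fin n → ℝ) (hc : ∀ s, 0 ≤ c s)
    (h : ∀ x : Fin n → ℝ, ∑ s, c s * Real.exp (E s ⬝ᵥ x) = ∑ t, c' t * Real.exp (E' t ⬝ᵥ x))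
    (s : S) (hs : 0 < c s) : ∃ t, c' t ≠ 0 ∧ E' t = E s := by
  classical
  by_contra! hne
  let χ : (Fin n → ℝ) → (Multiplicative (Fin n → ℝ) →* ℝ) := fun e =>
    { toFun := fun x => Real.exp (e ⬝ᵥ x.toAdd)
      map_one' := by simp
      map_mul' := by intro x y; simp [dotProduct_add, Real.exp_add] }
  have hχ : Function.Injective χ := by
    intro e e' hee
    ext i
    have := DFunLike.congr_fun hee (Multiplicative.ofAdd (Pi.single i 1))
    simpa [χ] using this
  have hli := (linearIndependent_monoidHom (Multiplicative (Fin n → ℝ)) ℝ).comp χ hχ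
  rw [linearIndependent_iff'] at hli
  have h0 := hli (Finset.univ.image E ∪ Finset.univ.image E')
    (fun e => (∑ r, if E r = e then c r else 0) - ∑ t, if E' t = e then c' t else 0) ?_ (E s)
    (by simp)
  · have h1 : ∑ t, (if E' t = E s then c' t else 0) = 0 :=
      Finset.sum_eq_zero fun t _ => by
        by_cases h3 : c' t = 0
        · simp [h3]
        · exact if_neg (hne t h3)
    have h2 : c s ≤ ∑ r, if E r = E s then c r else 0 := by
      have := Finset.single_le_sum (f := fun r => if E r = E s then c r else 0)
        (fun r _ => by split_ifs <;> simp [hc]) (Finset.mem_univ s)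
      simpa using this
    rw [h1, sub_zero] at h0
    linarith
  · ext x
    simp only [Finset.sum_apply, Pi.smul_apply, smul_eq_mul, Function.comp_apply, sub_mul,
      Finset.sum_sub_distrib, Pi.zero_apply]
    have hx := h x.toAdd
    rw [← sum_fiberwise_exp c E x.toAdd (Finset.univ.image E ∪ Finset.univ.image E') (by simp),
      ← sum_fiberwise_exp c' E' x.toAdd (Finset.univ.image E ∪ Finset.univ.image E') (by simp)] at hx
    exact sub_eq_zero.2 hx

/-! ### The Monge–Ampère equation for log-sum-exp potentials -/

/-- The exponential sum `∑ c_I e^{q_I · x}` with coefficients `c` and frequencies `q`. -/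
noncomputable def expSum {n : ℕ} {ι : Type*} [Fintype ι] (q : ι → Fin n → ℝ) (c : ι → ℝ)
    (x : Fin n → ℝ) : ℝ := ∑ I, c I * Real.exp (q I ⬝ᵥ x)

theorem expSum_differentiable {n : ℕ} {ι : Type*} [Fintype ι] (q : ι → Fin n → ℝ) (c : ι → ℝ) :
    Differentiable ℝ (expSum q c) := by
  unfold expSum dotProduct
  fun_prop

theorem pderivAt_expSum {n : ℕ} {ι : Type*} [Fintype ι] (q : ι → Fin n → ℝ) (c : ι → ℝ)
    (i : Fin n) : pderivAt (expSum q c) i = expSum q (fun I => c I * q I i) := by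
  ext x
  have h : HasFDerivAt (expSum q c) (∑ I, c I • (Real.exp (q I ⬝ᵥ x) •
      ∑ k, q I k • (ContinuousLinearMap.proj k : (Fin n → ℝ) →L[ℝ] ℝ))) x := by
    unfold expSum dotProduct
    exact HasFDerivAt.fun_sum fun I _ => ((HasFDerivAt.fun_sum fun k _ =>
      (hasFDerivAt_apply k x).const_mul (q I k)).exp).const_mul (c I)
  rw [pderivAt, h.fderiv]
  simp only [expSum, sum_apply, smul_apply,
    ContinuousLinearMap.proj_apply, smul_eq_mul, Pi.single_apply, mul_ite, mul_one, mul_zero,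
    Finset.sum_ite_eq', Finset.mem_univ, if_true]
  refine Finset.sum_congr rfl fun I _ => by
    ring

/-- The potential `log (∑ a_I e^{q_I · x}) - ∑ x_i`. -/
noncomputable def logPot {n : ℕ} {ι : Type*} [Fintype ι] (q : ι → Fin n → ℝ) (a : ι → ℝ)
    (x : Fin n → ℝ) : ℝ := Real.log (expSum q a x) - ∑ i, x i

theorem expSum_pos {n : ℕ} {ι : Type*} [Fintype ι] [Nonempty ι] (q : ι → Fin n → ℝ) {a : ι → ℝ}
    (ha : ∀ I, 0 < a I) (x : Fin n → ℝ) : 0 < expSum q a x :=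
  Finset.sum_pos (fun I _ => mul_pos (ha I) (Real.exp_pos _)) Finset.univ_nonempty

theorem logPot_differentiable {n : ℕ} {ι : Type*} [Fintype ι] [Nonempty ι] (q : ι → Fin n → ℝ)
    {a : ι → ℝ} (ha : ∀ I, 0 < a I) : Differentiable ℝ (logPot q a) := by
  intro x
  exact ((expSum_differentiable q a x).log (expSum_pos q ha x).ne').sub
    (by fun_prop)

theorem pderivAt_logPot {n : ℕ} {ι : Type*} [Fintype ι] [Nonempty ι] (q : ι → Fin n → ℝ)
    {a : ι → ℝ} (ha : ∀ I, 0 < a I) (i : Fin n) :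
    pderivAt (logPot q a) i =
      fun x => expSum q (fun I => a I * q I i) x / expSum q a x - 1 := by
  ext x
  have h : HasFDerivAt (logPot q a) ((expSum q a x)⁻¹ • fderiv ℝ (expSum q a) x -
      ∑ k, (ContinuousLinearMap.proj k : (Fin n → ℝ) →L[ℝ] ℝ)) x := by
    unfold logPot
    exact ((expSum_differentiable q a x).hasFDerivAt.log (expSum_pos q ha x).ne').sub
      (HasFDerivAt.fun_sum fun k _ => hasFDerivAt_apply k x)
  rw [pderivAt, h.fderiv, ← pderivAt_expSum]
  simp [pderivAt, Pi.single_apply]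
  ring

/-- The Hessian of `log f`, multiplied by `f`, in the form of a Schur complement. -/
theorem hessMat_logPot {n : ℕ} {ι : Type*} [Fintype ι] [Nonempty ι] (q : ι → Fin n → ℝ)
    {a : ι → ℝ} (ha : ∀ I, 0 < a I) (x : Fin n → ℝ) (i j : Fin n) :
    expSum q a x * hessMat (logPot q a) x i j =
      expSum q (fun I => a I * q I i * q I j) x -
        expSum q (fun I => a I * q I i) x * (expSum q a x)⁻¹ *
          expSum q (fun I => a I * q I j) x := by
  have hp := (expSum_pos q ha x).ne'
  have h := ((expSum_differentiable q (fun I => a I * q I j) x).hasFDerivAt.fun_mul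
    ((hasDerivAt_inv hp).comp_hasFDerivAt x (expSum_differentiable q a x).hasFDerivAt)).sub_const 1
  have e0 : pderivAt (logPot q a) j = fun x => expSum q (fun I => a I * q I j) x *
      ((fun y => y⁻¹) ∘ expSum q a) x - 1 := by
    rw [pderivAt_logPot q ha]; rfl
  have e : (fun I => a I * q I j * q I i) = (fun I => a I * q I i * q I j) := by
    ext I; ring
  rw [hessMat, Matrix.of_apply, e0, pderivAt, h.fderiv]
  have e1 := congrFun (pderivAt_expSum q a i) x
  have e2 := congrFun (pderivAt_expSum q (fun I => a I * q I j) i) x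
  rw [e] at e2
  rw [← e1, ← e2]
  simp [pderivAt]
  field_simp
  ring

/-- The homogenisation `(1, q_I)` of the point `q_I`: a family of points is affinely independent
exactly when their homogenisations are linearly independent. -/
def homog {n : ℕ} {ι : Type*} (q : ι → Fin n → ℝ) (I : ι) : Unit ⊕ Fin n → ℝ :=
  Sum.elim (fun _ => 1) (q I)

/-- The weighted Gram matrix of the vectors `(1, q_I)` has upper left entry `f` and Schur complement
`f D²u`. -/
theorem det_expSum {n : ℕ} {ι : Type*} [Fintype ι] [Nonempty ι] (q : ι → Fin n → ℝ)
    {a : ι → ℝ} (ha : ∀ I, 0 < a I) (x : Fin n → ℝ) :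
    (Matrix.of fun i j => ∑ I, (a I * Real.exp (q I ⬝ᵥ x)) * homog q I i * homog q I j :
      Matrix (Unit ⊕ Fin n) (Unit ⊕ Fin n) ℝ).det =
    expSum q a x ^ (n + 1) * (hessMat (logPot q a) x).det := by
  have hp := (expSum_pos q ha x).ne'
  let A : Matrix Unit Unit ℝ := Matrix.of fun _ _ => expSum q a x
  let B : Matrix Unit (Fin n) ℝ := Matrix.of fun _ j => expSum q (fun I => a I * q I j) x
  let C : Matrix (Fin n) Unit ℝ := Matrix.of fun i _ => expSum q (fun I => a I * q I i) x
  let D : Matrix (Fin n) (Fin n) ℝ :=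
    Matrix.of fun i j => expSum q (fun I => a I * q I i * q I j) x
  have hM : (Matrix.of fun i j => ∑ I, (a I * Real.exp (q I ⬝ᵥ x)) * homog q I i * homog q I j :
      Matrix (Unit ⊕ Fin n) (Unit ⊕ Fin n) ℝ) = Matrix.fromBlocks A B C D := by
    ext i j
    rcases i with i | i <;> rcases j with j | j <;>
      simp only [Matrix.of_apply, homog, Matrix.fromBlocks_apply₁₁, Matrix.fromBlocks_apply₁₂,
        Matrix.fromBlocks_apply₂₁, Matrix.fromBlocks_apply₂₂, A, B, C, D, expSum,
        Sum.elim_inl, Sum.elim_inr] <;>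
      exact Finset.sum_congr rfl fun I _ => by ring
  let A' : Matrix Unit Unit ℝ := Matrix.of fun _ _ => (expSum q a x)⁻¹
  let _ : Invertible A := ⟨A',
    by ext; simp [A, A', Matrix.mul_apply, hp], by ext; simp [A, A', Matrix.mul_apply, hp]⟩
  have hS : D - C * ⅟A * B = expSum q a x • hessMat (logPot q a) x := by
    ext i j
    rw [Matrix.smul_apply, smul_eq_mul, hessMat_logPot q ha]
    change _ - ((C * A') * B) i j = _
    simp [A', B, C, D, Matrix.mul_apply]
  rw [hM, Matrix.det_fromBlocks₁₁, hS, Matrix.det_smul]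
  simp [A, pow_succ]
  ring

/-- Comparison of the frequencies on both sides of the Monge–Ampère equation, multiplied by
`(n+1)! f^{n+1}`. -/
theorem support_identity {n : ℕ} {ι : Type*} [Fintype ι] [Nonempty ι] (q : ι → Fin n → ℝ)
    {a : ι → ℝ} (ha : ∀ I, 0 < a I) (hMA : SatisfiesMA (logPot q a)) :
    (∀ φ : Unit ⊕ Fin n → ι,
      (Matrix.of fun k => homog q (φ k) : Matrix (Unit ⊕ Fin n) (Unit ⊕ Fin n) ℝ).det ≠ 0 →
      ∃ ψ : Fin n → ι, 1 + ∑ k, q (ψ k) = ∑ k, q (φ k)) ∧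
    (∀ ψ : Fin n → ι, ∃ φ : Unit ⊕ Fin n → ι,
      (Matrix.of fun k => homog q (φ k) : Matrix (Unit ⊕ Fin n) (Unit ⊕ Fin n) ℝ).det ≠ 0 ∧
      ∑ k, q (φ k) = 1 + ∑ k, q (ψ k)) := by
  classical
  let c : (Unit ⊕ Fin n → ι) → ℝ := fun φ => (∏ k, a (φ k)) *
    (Matrix.of fun k => homog q (φ k) : Matrix (Unit ⊕ Fin n) (Unit ⊕ Fin n) ℝ).det ^ 2
  let c' : (Fin n → ι) → ℝ := fun ψ => ((n + 1).factorial : ℝ) * ∏ k, a (ψ k)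
  have hpos : ∀ φ : Unit ⊕ Fin n → ι, 0 < ∏ k, a (φ k) := fun φ =>
    Finset.prod_pos fun k _ => ha _
  have hc : ∀ φ, 0 ≤ c φ := fun φ => mul_nonneg (hpos φ).le (sq_nonneg _)
  have hc' : ∀ ψ, 0 < c' ψ := fun ψ => mul_pos (by positivity) (Finset.prod_pos fun k _ => ha _)
  have main : ∀ x : Fin n → ℝ, ∑ φ, c φ * Real.exp ((∑ k, q (φ k)) ⬝ᵥ x) =
      ∑ ψ, c' ψ * Real.exp ((1 + ∑ k, q (ψ k)) ⬝ᵥ x) := by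
    intro x
    have hp := expSum_pos q ha x
    have h1 := gram_det (fun I => a I * Real.exp (q I ⬝ᵥ x)) (homog q)
    rw [det_expSum q ha, hMA x] at h1
    have h2 : Real.exp (-logPot q a x) = Real.exp (1 ⬝ᵥ x) / expSum q a x := by
      rw [logPot, neg_sub, Real.exp_sub, Real.exp_log hp, one_dotProduct]
    have h3 : expSum q a x ^ (n + 1) * Real.exp (-logPot q a x) =
        expSum q a x ^ n * Real.exp (1 ⬝ᵥ x) := by
      rw [h2]; field_simp; ring
    have h4 : Fintype.card (Unit ⊕ Fin n) = n + 1 := by simp [add_comm]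
    rw [h3, h4] at h1
    have h5 : expSum q a x ^ n = ∑ ψ : Fin n → ι, ∏ k, (a (ψ k) * Real.exp (q (ψ k) ⬝ᵥ x)) :=
      Fintype.sum_pow _ n
    have hL : ∀ φ : Unit ⊕ Fin n → ι, c φ * Real.exp ((∑ k, q (φ k)) ⬝ᵥ x) =
        (∏ k, (a (φ k) * Real.exp (q (φ k) ⬝ᵥ x))) *
        (Matrix.of fun k => homog q (φ k) : Matrix (Unit ⊕ Fin n) (Unit ⊕ Fin n) ℝ).det ^ 2 := by
      intro φ
      rw [Finset.prod_mul_distrib, ← Real.exp_sum, sum_dotProduct]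
      simp only [c]; ring
    have hR : ∀ ψ : Fin n → ι, c' ψ * Real.exp ((1 + ∑ k, q (ψ k)) ⬝ᵥ x) =
        ((n + 1).factorial : ℝ) * ((∏ k, (a (ψ k) * Real.exp (q (ψ k) ⬝ᵥ x))) *
          Real.exp (1 ⬝ᵥ x)) := by
      intro ψ
      rw [Finset.prod_mul_distrib, ← Real.exp_sum, add_dotProduct, sum_dotProduct, Real.exp_add]
      simp only [c']; ring
    rw [Finset.sum_congr rfl fun φ _ => hL φ, Finset.sum_congr rfl fun ψ _ => hR ψ, ← h1, h5,
      ← Finset.mul_sum, Finset.sum_mul]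
  constructor
  · intro φ hφ
    obtain ⟨ψ, -, h⟩ := exp_support c (fun φ => ∑ k, q (φ k)) c' (fun ψ => 1 + ∑ k, q (ψ k)) hc
      main φ (mul_pos (hpos φ) (by positivity))
    exact ⟨ψ, h⟩
  · intro ψ
    obtain ⟨φ, hφ, h⟩ := exp_support c' (fun ψ => 1 + ∑ k, q (ψ k)) c (fun φ => ∑ k, q (φ k))
      (fun ψ => (hc' ψ).le) (fun x => (main x).symm) ψ (hc' ψ)
    exact ⟨φ, fun h0 => hφ (by simp [c, h0]), h⟩

/-! ### The closure of the gradient image -/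

theorem gradMap_mem_convexHull {n : ℕ} {ι : Type*} [Fintype ι] [Nonempty ι] (q : ι → Fin n → ℝ)
    {a : ι → ℝ} (ha : ∀ I, 0 < a I) (x : Fin n → ℝ) :
    gradMap (logPot q a) x ∈ convexHull ℝ (Set.range fun I => q I - 1) := by
  have hp := expSum_pos q ha x
  have hsum : ∑ I, a I * Real.exp (q I ⬝ᵥ x) / expSum q a x = 1 := by
    rw [← Finset.sum_div]; exact div_self hp.ne'
  have h := (convex_convexHull ℝ (Set.range fun I => q I - 1)).sum_mem
    (t := Finset.univ) (w := fun I => a I * Real.exp (q I ⬝ᵥ x) / expSum q a x)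
    (z := fun I => q I - 1)
    (fun I _ => div_nonneg (mul_nonneg (ha I).le (Real.exp_pos _).le) hp.le) hsum
    (fun I _ => subset_convexHull ℝ _ ⟨I, rfl⟩)
  convert h using 1
  ext i
  rw [gradMap, pderivAt_logPot q ha]
  simp only [Finset.sum_apply, Pi.smul_apply, Pi.sub_apply, smul_eq_mul, mul_sub, Pi.one_apply,
    mul_one, Finset.sum_sub_distrib, hsum]
  congr 1
  rw [expSum, Finset.sum_div]
  exact Finset.sum_congr rfl fun I _ => by ring

/-- For `y` in the polytope some `I` satisfies `y · x ≤ p_I · x`, and then the single term `I` of the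
exponential sum already bounds the potential from below. -/
theorem logPot_sub_bddBelow {n : ℕ} {ι : Type*} [Fintype ι] [Nonempty ι] (q : ι → Fin n → ℝ)
    {a : ι → ℝ} (ha : ∀ I, 0 < a I) {y : Fin n → ℝ}
    (hy : y ∈ convexHull ℝ (Set.range fun I => q I - 1)) :
    ∃ C, ∀ x, C ≤ logPot q a x - y ⬝ᵥ x := by
  obtain ⟨C, hC⟩ := (Set.finite_range fun I => Real.log (a I)).bddBelow
  refine ⟨C, fun x => ?_⟩
  obtain ⟨I, hI⟩ : ∃ I, y ⬝ᵥ x ≤ (q I - 1) ⬝ᵥ x := by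
    by_contra! hlt
    have hconv : Convex ℝ {z : Fin n → ℝ | z ⬝ᵥ x < y ⬝ᵥ x} :=
      convex_halfSpace_lt ⟨fun _ _ => add_dotProduct _ _ _, fun _ _ => smul_dotProduct _ _ _⟩ _
    have := convexHull_min (t := {z : Fin n → ℝ | z ⬝ᵥ x < y ⬝ᵥ x})
      (by rintro _ ⟨I, rfl⟩; exact hlt I) hconv hy
    exact lt_irrefl (y ⬝ᵥ x) this
  have h1 : a I * Real.exp (q I ⬝ᵥ x) ≤ expSum q a x :=
    Finset.single_le_sum (f := fun I => a I * Real.exp (q I ⬝ᵥ x))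
      (fun J _ => mul_nonneg (ha J).le (Real.exp_pos _).le) (Finset.mem_univ I)
  have h2 := Real.log_le_log (mul_pos (ha I) (Real.exp_pos _)) h1
  rw [Real.log_mul (ha I).ne' (Real.exp_pos _).ne', Real.log_exp] at h2
  have h3 : C ≤ Real.log (a I) := hC ⟨I, rfl⟩
  rw [sub_dotProduct, one_dotProduct] at hI
  rw [logPot]
  linarith

/-- Every point of the convex hull is a limit of gradients, by a regularised minimisation of
`u(x) - y · x`. -/
theorem convexHull_subset_closure {n : ℕ} {ι : Type*} [Fintype ι] [Nonempty ι]
    (q : ι → Fin n → ℝ) {a : ι → ℝ} (ha : ∀ I, 0 < a I) {y : Fin n → ℝ}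
    (hy : y ∈ convexHull ℝ (Set.range fun I => q I - 1)) :
    y ∈ closure (Set.range (gradMap (logPot q a))) := by
  obtain ⟨C, hC⟩ := logPot_sub_bddBelow q ha hy
  rw [Metric.mem_closure_iff]
  intro δ hδ
  have hL : 0 ≤ logPot q a 0 - C := by have := hC 0; simp at this; linarith
  -- At a minimiser `x₀` of `h` below, `|Du(x₀) - y|² ≤ 4ε² |x₀|² ≤ 4ε (u(0) - C)`.
  obtain ⟨ε, hε, hεδ⟩ : ∃ ε > 0, 4 * ε * (logPot q a 0 - C) < δ ^ 2 := by
    refine ⟨δ ^ 2 / (4 * (logPot q a 0 - C + 1)), by positivity, ?_⟩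
    have : 4 * (δ ^ 2 / (4 * (logPot q a 0 - C + 1))) * (logPot q a 0 - C) =
      δ ^ 2 * ((logPot q a 0 - C) / (logPot q a 0 - C + 1)) := by field_simp
    rw [this]
    have h1 : (logPot q a 0 - C) / (logPot q a 0 - C + 1) < 1 := by
      rw [div_lt_one (by positivity)]; linarith
    have h2 : 0 < δ ^ 2 := by positivity
    nlinarith
  let h : (Fin n → ℝ) → ℝ := fun x => logPot q a x - ∑ i, y i * x i + ε * ∑ i, x i ^ 2
  have hcont : Continuous h := by
    have := (logPot_differentiable q ha).continuous
    fun_prop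
  have hsq : ∀ (x : Fin n → ℝ) i, x i ^ 2 ≤ ∑ i, x i ^ 2 := fun x i =>
    Finset.single_le_sum (f := fun i => x i ^ 2) (fun j _ => sq_nonneg _) (Finset.mem_univ i)
  have htend : Filter.Tendsto h (Filter.cocompact _) Filter.atTop := by
    have h1 : Filter.Tendsto (fun x : Fin n → ℝ => C + ε * ‖x‖ ^ 2) (Filter.cocompact _)
        Filter.atTop := by
      refine Filter.tendsto_atTop_add_const_left _ _ (Filter.Tendsto.const_mul_atTop hε ?_)
      exact (Filter.tendsto_pow_atTop two_ne_zero).comp tendsto_norm_cocompact_atTop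
    refine Filter.tendsto_atTop_mono (fun x => ?_) h1
    have h2 : ‖x‖ ^ 2 ≤ ∑ i, x i ^ 2 := by
      have h3 : 0 ≤ ∑ i, x i ^ 2 := Finset.sum_nonneg fun i _ => sq_nonneg _
      have h4 : ‖x‖ ≤ √(∑ i, x i ^ 2) := by
        rw [pi_norm_le_iff_of_nonneg (Real.sqrt_nonneg _)]
        exact fun i => Real.abs_le_sqrt (hsq x i)
      calc ‖x‖ ^ 2 ≤ √(∑ i, x i ^ 2) ^ 2 := by gcongr
        _ = _ := Real.sq_sqrt h3
    have h5 : C ≤ logPot q a x - ∑ i, y i * x i := hC x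
    have h6 := mul_le_mul_of_nonneg_left h2 hε.le
    simp only [h]
    linarith
  obtain ⟨x₀, hx₀⟩ := hcont.exists_forall_le htend
  have hder : HasFDerivAt h (fderiv ℝ (logPot q a) x₀ -
      ∑ i, y i • (ContinuousLinearMap.proj i : (Fin n → ℝ) →L[ℝ] ℝ) +
      ε • ∑ i, (2 * x₀ i) • (ContinuousLinearMap.proj i : (Fin n → ℝ) →L[ℝ] ℝ)) x₀ := by
    refine ((logPot_differentiable q ha x₀).hasFDerivAt.sub
      (HasFDerivAt.fun_sum fun i _ => (hasFDerivAt_apply i x₀).const_mul (y i))).add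
      (HasFDerivAt.const_mul (HasFDerivAt.fun_sum fun i _ => ?_) ε)
    simpa using (hasFDerivAt_apply (𝕜 := ℝ) i x₀).pow 2
  have hzero := (IsMinOn.isLocalMin (isMinOn_univ_iff.2 hx₀) Filter.univ_mem).hasFDerivAt_eq_zero hder
  have hval : ε * ∑ i, x₀ i ^ 2 ≤ logPot q a 0 - C := by
    have h1 : C ≤ logPot q a x₀ - ∑ i, y i * x₀ i := hC x₀
    have h2 := hx₀ 0
    simp [h] at h2
    linarith
  refine ⟨gradMap (logPot q a) x₀, ⟨x₀, rfl⟩, ?_⟩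
  rw [dist_pi_lt_iff hδ]
  intro i
  have h1 : gradMap (logPot q a) x₀ i - y i + ε * (2 * x₀ i) = 0 := by
    have := DFunLike.congr_fun hzero (Pi.single i 1)
    simpa [Pi.single_apply, gradMap, pderivAt] using this
  have h2 : y i - gradMap (logPot q a) x₀ i = 2 * ε * x₀ i := by linarith
  rw [Real.dist_eq, h2]
  refine abs_lt_of_sq_lt_sq ?_ hδ.le
  calc (2 * ε * x₀ i) ^ 2 = 4 * ε * (ε * x₀ i ^ 2) := by ring
    _ ≤ 4 * ε * (logPot q a 0 - C) := by
        have := mul_le_mul_of_nonneg_left (hsq x₀ i) hε.le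
        have h3 : ε * x₀ i ^ 2 ≤ logPot q a 0 - C := this.trans hval
        gcongr
    _ < δ ^ 2 := hεδ

theorem closure_range_gradMap {n : ℕ} {ι : Type*} [Fintype ι] [Nonempty ι]
    (q : ι → Fin n → ℝ) {a : ι → ℝ} (ha : ∀ I, 0 < a I) :
    closure (Set.range (gradMap (logPot q a))) = convexHull ℝ (Set.range fun I => q I - 1) := by
  refine Set.Subset.antisymm (closure_minimal ?_ ((Set.finite_range _).isClosed_convexHull ℝ))
    fun y hy => convexHull_subset_closure q ha hy
  rintro _ ⟨x, rfl⟩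
  exact gradMap_mem_convexHull q ha x

/-! ### Lattice relations on facets -/

theorem exists_dotProduct {n : ℕ} (f : (Fin n → ℝ) →ₗ[ℝ] ℝ) :
    ∃ z : Fin n → ℝ, ∀ x, f x = z ⬝ᵥ x := by
  refine ⟨fun i => f (Pi.single i 1), fun x => ?_⟩
  rw [LinearMap.pi_apply_eq_sum_univ f x]
  simp only [dotProduct, smul_eq_mul]
  refine Finset.sum_congr rfl fun i _ => ?_
  rw [mul_comm]
  congr 2
  ext j
  simp [Pi.single_apply, eq_comm]

theorem homog_mulVec {n : ℕ} {ι : Type*} (q : ι → Fin n → ℝ) (φ : Unit ⊕ Fin n → ι)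
    (v : Unit ⊕ Fin n → ℝ) (k : Unit ⊕ Fin n) :
    ((Matrix.of fun k => homog q (φ k) : Matrix (Unit ⊕ Fin n) (Unit ⊕ Fin n) ℝ).mulVec v) k =
      v (Sum.inl ()) + (v ∘ Sum.inr) ⬝ᵥ q (φ k) := by
  simp [Matrix.mulVec, dotProduct, homog, mul_comm]

/-- The configuration `p_I` is not contained in a closed half-space bounded by a hyperplane through the
origin. The hypothesis is used for the constant tuple at a maximiser of `z · p_I`. -/
theorem exists_dotProduct_pos {n : ℕ} {ι : Type*} [Fintype ι] [Nonempty ι] (q : ι → Fin n → ℝ)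
    (hB : ∀ ψ : Fin n → ι, ∃ φ : Unit ⊕ Fin n → ι,
      (Matrix.of fun k => homog q (φ k) : Matrix (Unit ⊕ Fin n) (Unit ⊕ Fin n) ℝ).det ≠ 0 ∧
      ∑ k, q (φ k) = 1 + ∑ k, q (ψ k))
    {z : Fin n → ℝ} (hz : z ≠ 0) : ∃ I, 0 < z ⬝ᵥ (q I - 1) := by
  by_contra! hneg
  obtain ⟨I, hI⟩ := Finite.exists_max fun I => z ⬝ᵥ (q I - 1)
  obtain ⟨φ, hφ, hsum⟩ := hB fun _ => I
  have h1 : ∑ k, (z ⬝ᵥ (q I - 1) - z ⬝ᵥ (q (φ k) - 1)) = z ⬝ᵥ (q I - 1) := by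
    have h2 := congrArg (fun y => z ⬝ᵥ y) hsum
    simp only [dotProduct_sum, dotProduct_add] at h2
    simp only [Finset.sum_sub_distrib, dotProduct_sub, h2]
    simp
    ring
  have h2 : ∀ k, z ⬝ᵥ (q I - 1) - z ⬝ᵥ (q (φ k) - 1) = 0 := by
    have h0 : ∀ k ∈ Finset.univ, 0 ≤ z ⬝ᵥ (q I - 1) - z ⬝ᵥ (q (φ k) - 1) :=
      fun k _ => sub_nonneg.2 (hI (φ k))
    have h3 := (Finset.sum_eq_zero_iff_of_nonneg h0).1
      (le_antisymm (h1.trans_le (hneg I)) (Finset.sum_nonneg h0))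
    exact fun k => h3 k (Finset.mem_univ k)
  refine hφ (Matrix.exists_mulVec_eq_zero_iff.1
    ⟨Sum.elim (fun _ => -(z ⬝ᵥ q I)) z, fun h0 => hz ?_, ?_⟩)
  · ext i
    exact congrFun h0 (Sum.inr i)
  · ext k
    rw [homog_mulVec]
    have := h2 k
    simp only [dotProduct_sub] at this
    simp only [Sum.elim_inl, Sum.elim_comp_inr, Pi.zero_apply]
    linarith

/-- With `λ_I = 1 - w · p_I`, the conclusion reads `λ_J = 1 + ∑ λ_{ψ k}`. The points `p_{F k}` lie on
the hyperplane `w = 1` and span `ℝⁿ`, and `p_J` lies off this hyperplane, so these `n+1` points are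
affinely independent. -/
theorem facet_relation {n : ℕ} {ι : Type*} (q : ι → Fin n → ℝ)
    (hA : ∀ φ : Unit ⊕ Fin n → ι,
      (Matrix.of fun k => homog q (φ k) : Matrix (Unit ⊕ Fin n) (Unit ⊕ Fin n) ℝ).det ≠ 0 →
      ∃ ψ : Fin n → ι, 1 + ∑ k, q (ψ k) = ∑ k, q (φ k))
    (w : Fin n → ℝ) (F : Fin n → ι) (hF : ∀ k, w ⬝ᵥ (q (F k) - 1) = 1)
    (hspan : ∀ z : Fin n → ℝ, (∀ k, z ⬝ᵥ (q (F k) - 1) = 0) → z = 0)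
    (J : ι) (hJ : w ⬝ᵥ (q J - 1) ≠ 1) :
    ∃ ψ : Fin n → ι, ∑ k, (1 - w ⬝ᵥ (q (ψ k) - 1)) = - (w ⬝ᵥ (q J - 1)) := by
  have hdet : (Matrix.of fun k => homog q (Sum.elim (fun _ => J) F k) :
      Matrix (Unit ⊕ Fin n) (Unit ⊕ Fin n) ℝ).det ≠ 0 := by
    intro hdet
    obtain ⟨v, hv0, hv⟩ := Matrix.exists_mulVec_eq_zero_iff.2 hdet
    have hk : ∀ k : Unit ⊕ Fin n, v (Sum.inl ()) + (v ∘ Sum.inr) ⬝ᵥ q (Sum.elim (fun _ => J) F k) = 0 := by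
      intro k
      rw [← homog_mulVec, hv]; rfl
    -- `c` takes the same value `t` at all `p_{F k}`, as `t • w` does, hence `c = t • w`.
    set c : Fin n → ℝ := v ∘ Sum.inr with hc
    set t : ℝ := -(v (Sum.inl ()) + c ⬝ᵥ 1) with ht
    have hcw : c - t • w = 0 := by
      refine hspan _ fun k => ?_
      have := hk (Sum.inr k)
      simp only [Sum.elim_inr] at this
      rw [sub_dotProduct, smul_dotProduct, hF k, dotProduct_sub, smul_eq_mul, ht]
      linarith
    have hct : c = t • w := sub_eq_zero.1 hcw
    have hJ0 := hk (Sum.inl ())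
    simp only [Sum.elim_inl] at hJ0
    have h1 : c ⬝ᵥ (q J - 1) = t := by rw [dotProduct_sub, ht]; linarith
    rw [hct, smul_dotProduct, smul_eq_mul] at h1
    have ht0 : t = 0 := by
      by_contra h
      exact hJ (mul_left_cancel₀ h (h1.trans (mul_one t).symm))
    have hc0 : c = 0 := by rw [hct, ht0, zero_smul]
    apply hv0
    ext k
    rcases k with k | k
    · rw [hc0, zero_dotProduct, add_zero] at hJ0
      exact hJ0
    · exact congrFun hc0 k
  obtain ⟨ψ, hψ⟩ := hA (Sum.elim (fun _ => J) F) hdet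
  refine ⟨ψ, ?_⟩
  have h1 := congrArg (fun y => w ⬝ᵥ y) hψ
  have h2 : ∑ k, w ⬝ᵥ (q (F k) - 1) = n := by simp [hF]
  simp only [Fintype.sum_sum_type, dotProduct_add, dotProduct_sum, Sum.elim_inl, Sum.elim_inr,
    Finset.univ_unique, Finset.sum_singleton] at h1
  simp only [dotProduct_sub, Finset.sum_sub_distrib, Finset.sum_const, Finset.card_univ,
    Fintype.card_fin, nsmul_eq_mul, mul_one] at h2 ⊢
  linarith

/-- Induction on `1 - w · p_J`, phrased as a minimal counterexample in the finite index set: in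
`facet_relation` all `ψ k` have a strictly larger value of `w` than `J`. -/
theorem facet_integral {n : ℕ} {ι : Type*} [Fintype ι] (q : ι → Fin n → ℝ)
    (hA : ∀ φ : Unit ⊕ Fin n → ι,
      (Matrix.of fun k => homog q (φ k) : Matrix (Unit ⊕ Fin n) (Unit ⊕ Fin n) ℝ).det ≠ 0 →
      ∃ ψ : Fin n → ι, 1 + ∑ k, q (ψ k) = ∑ k, q (φ k))
    (w : Fin n → ℝ) (hw : ∀ I, w ⬝ᵥ (q I - 1) ≤ 1)
    (F : Fin n → ι) (hF : ∀ k, w ⬝ᵥ (q (F k) - 1) = 1)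
    (hspan : ∀ z : Fin n → ℝ, (∀ k, z ⬝ᵥ (q (F k) - 1) = 0) → z = 0) (J : ι) :
    ∃ m : ℤ, w ⬝ᵥ (q J - 1) = m := by
  classical
  by_contra hbad
  obtain ⟨J₀, hJ₀, hmax⟩ := Finset.exists_max_image
    (Finset.univ.filter fun J => ¬ ∃ m : ℤ, w ⬝ᵥ (q J - 1) = m) (fun J => w ⬝ᵥ (q J - 1))
    ⟨J, by simpa using hbad⟩
  have hJ₀' : ¬ ∃ m : ℤ, w ⬝ᵥ (q J₀ - 1) = m := (Finset.mem_filter.1 hJ₀).2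
  obtain ⟨ψ, hψ⟩ := facet_relation q hA w F hF hspan J₀ fun h => hJ₀' ⟨1, by simpa using h⟩
  have hint : ∀ k, ∃ m : ℤ, w ⬝ᵥ (q (ψ k) - 1) = m := by
    intro k
    by_contra hk
    have h1 := hmax (ψ k) (by simpa using hk)
    have h2 := Finset.single_le_sum (f := fun k => 1 - w ⬝ᵥ (q (ψ k) - 1))
      (fun j _ => sub_nonneg.2 (hw (ψ j))) (Finset.mem_univ k)
    simp only [hψ] at h2
    linarith
  choose m hm using hint
  refine hJ₀' ⟨-∑ k, (1 - m k), ?_⟩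
  simp only [hm] at hψ
  push_cast
  linarith

/-! ### Extreme points of the polar -/

/-- The polar `{w | ∀ I, w · p_I ≤ 1}` of the point configuration `p_I = q_I - 1`. -/
def polarSet {n : ℕ} {ι : Type*} (q : ι → Fin n → ℝ) : Set (Fin n → ℝ) :=
  {w | ∀ I, w ⬝ᵥ (q I - 1) ≤ 1}

/-- At an extreme point of the polar the active constraints span: otherwise one could move a little
in the directions `z` and `-z` without leaving the polar. -/
theorem extreme_spanning {n : ℕ} {ι : Type*} [Fintype ι] (q : ι → Fin n → ℝ) {w : Fin n → ℝ}
    (hw : w ∈ (polarSet q).extremePoints ℝ) (z : Fin n → ℝ)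
    (hz : ∀ I, w ⬝ᵥ (q I - 1) = 1 → z ⬝ᵥ (q I - 1) = 0) : z = 0 := by
  have hwK : ∀ I, w ⬝ᵥ (q I - 1) ≤ 1 := hw.1
  have hev : ∀ s : ℝ, ∀ᶠ ε in nhds (0 : ℝ), w + (s * ε) • z ∈ polarSet q := by
    intro s
    simp only [polarSet, Set.mem_ofPred_eq, Filter.eventually_all]
    intro I
    by_cases h : w ⬝ᵥ (q I - 1) = 1
    · refine Filter.Eventually.of_forall fun ε => ?_
      rw [add_dotProduct, smul_dotProduct, hz I h, h]
      simp
    · have hcont : Continuous fun ε : ℝ => (w + (s * ε) • z) ⬝ᵥ (q I - 1) := by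
        simp only [add_dotProduct, smul_dotProduct, smul_eq_mul]
        fun_prop
      have hlt : (w + (s * 0) • z) ⬝ᵥ (q I - 1) < 1 := by
        simpa using lt_of_le_of_ne (hwK I) h
      exact (hcont.continuousAt.eventually_lt continuousAt_const hlt).mono fun _ h => h.le
  obtain ⟨ε, ⟨h1, h2⟩, hε⟩ := (((hev 1).and (hev (-1))).filter_mono nhdsWithin_le_nhds |>.and
    (self_mem_nhdsWithin (s := Set.Ioi (0 : ℝ)))).exists
  have h3 := hw.2 h1 h2 ⟨1 / 2, 1 / 2, by norm_num, by norm_num, by norm_num, by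
    ext i; simp; ring⟩
  have h4 : ε • z = 0 := by simpa using h3
  exact (smul_eq_zero.1 h4).resolve_left (ne_of_gt hε)

/-- The active constraints at an extreme point of the polar contain a basis of `ℝⁿ`. -/
theorem extreme_basis {n : ℕ} {ι : Type*} [Fintype ι] (q : ι → Fin n → ℝ) {w : Fin n → ℝ}
    (hw : w ∈ (polarSet q).extremePoints ℝ) :
    ∃ F : Fin n → ι, (∀ k, w ⬝ᵥ (q (F k) - 1) = 1) ∧
      ∀ z : Fin n → ℝ, (∀ k, z ⬝ᵥ (q (F k) - 1) = 0) → z = 0 := by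
  let T : Set (Fin n → ℝ) := (fun I => q I - 1) '' {I | w ⬝ᵥ (q I - 1) = 1}
  have hT : Submodule.span ℝ T = ⊤ := by
    by_contra hne
    obtain ⟨f, hf0, hf⟩ := Submodule.exists_le_ker_of_lt_top _ (lt_top_iff_ne_top.2 hne)
    obtain ⟨z, hz⟩ := exists_dotProduct f
    have : z = 0 := extreme_spanning q hw z fun I hI => by
      rw [← hz]
      exact hf (Submodule.subset_span ⟨I, hI, rfl⟩)
    exact hf0 (LinearMap.ext fun x => by rw [hz, this]; simp)
  obtain ⟨f, hfT, hfspan, -⟩ := Submodule.exists_fun_fin_finrank_span_eq ℝ T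
  have hfin : Module.finrank ℝ (Submodule.span ℝ T) = n := by
    rw [hT, finrank_top]; simp
  replace hfspan := hfspan.trans hT
  choose G hG1 hG2 using hfT
  refine ⟨fun k => G (Fin.cast hfin.symm k), fun k => hG1 _, fun z hz => ?_⟩
  have h1 : ∀ x ∈ Submodule.span ℝ (Set.range f), z ⬝ᵥ x = 0 := by
    intro x hx
    induction hx using Submodule.span_induction with
    | mem x hx =>
      obtain ⟨k, rfl⟩ := hx
      rw [← hG2 k]
      simpa using hz (Fin.cast hfin k)
    | zero => simp
    | add x y _ _ hx hy => rw [dotProduct_add, hx, hy, add_zero]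
    | smul r x _ hx => rw [dotProduct_smul, hx, smul_zero]
  exact dotProduct_self_eq_zero.1 (h1 z (by rw [hfspan]; trivial))

theorem extreme_integral {n : ℕ} {ι : Type*} [Fintype ι] (q : ι → Fin n → ℝ)
    (hA : ∀ φ : Unit ⊕ Fin n → ι,
      (Matrix.of fun k => homog q (φ k) : Matrix (Unit ⊕ Fin n) (Unit ⊕ Fin n) ℝ).det ≠ 0 →
      ∃ ψ : Fin n → ι, 1 + ∑ k, q (ψ k) = ∑ k, q (φ k))
    (h0 : ∃ I, q I = 0) (h1 : ∀ i, ∃ I, q I = Pi.single i 1) {w : Fin n → ℝ}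
    (hw : w ∈ (polarSet q).extremePoints ℝ) : ∃ v : Fin n → ℤ, w = fun i => (v i : ℝ) := by
  obtain ⟨F, hF, hspan⟩ := extreme_basis q hw
  have hint := facet_integral q hA w hw.1 F hF hspan
  obtain ⟨I₀, hI₀⟩ := h0
  have : ∀ i, ∃ m : ℤ, w i = m := by
    intro i
    obtain ⟨I, hI⟩ := h1 i
    obtain ⟨m₀, hm₀⟩ := hint I₀
    obtain ⟨m, hm⟩ := hint I
    refine ⟨m - m₀, ?_⟩
    push_cast
    rw [← hm, ← hm₀, hI₀, hI]
    simp [dotProduct_sub]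
  choose v hv using this
  exact ⟨v, funext hv⟩

/-- The interior is nonempty because `p_I` runs through `-1` and `e_i - 1`; a hyperplane separating
the origin from it would contradict `hpos`. -/
theorem zero_mem_interior {n : ℕ} {ι : Type*} [Fintype ι] (q : ι → Fin n → ℝ)
    (hpos : ∀ z : Fin n → ℝ, z ≠ 0 → ∃ I, 0 < z ⬝ᵥ (q I - 1))
    (h0 : ∃ I, q I = 0) (h1 : ∀ i, ∃ I, q I = Pi.single i 1) :
    (0 : Fin n → ℝ) ∈ interior (convexHull ℝ (Set.range fun I => q I - 1)) := by
  have hne : (interior (convexHull ℝ (Set.range fun I => q I - 1))).Nonempty := by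
    obtain ⟨I₀, hI₀⟩ := h0
    rw [interior_convexHull_nonempty_iff_affineSpan_eq_top,
      AffineSubspace.affineSpan_eq_top_iff_vectorSpan_eq_top_of_nonempty ℝ _ _
        (Set.nonempty_of_mem (Set.mem_range_self I₀)),
      eq_top_iff, ← (Pi.basisFun ℝ (Fin n)).span_eq, Submodule.span_le]
    rintro _ ⟨i, rfl⟩
    obtain ⟨I, hI⟩ := h1 i
    have := vsub_mem_vectorSpan ℝ (Set.mem_range_self (f := fun I => q I - 1) I)
      (Set.mem_range_self I₀)
    simpa [hI, hI₀] using this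
  by_contra hnot
  have hconv := convex_convexHull ℝ (Set.range fun I => q I - 1)
  obtain ⟨f, hf⟩ := geometric_hahn_banach_open_point hconv.interior isOpen_interior hnot
  obtain ⟨z, hz⟩ := exists_dotProduct (f : (Fin n → ℝ) →ₗ[ℝ] ℝ)
  have hz' : ∀ x, f x = z ⬝ᵥ x := hz
  obtain ⟨b, hb⟩ := hne
  have hz0 : z ≠ 0 := by
    rintro rfl
    have := hf b hb
    simp [hz'] at this
  obtain ⟨I, hI⟩ := hpos z hz0
  have hmem : q I - 1 ∈ closure (interior (convexHull ℝ (Set.range fun I => q I - 1))) := by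
    rw [hconv.closure_interior_eq_closure_of_nonempty_interior ⟨b, hb⟩]
    exact subset_closure (subset_convexHull ℝ _ ⟨I, rfl⟩)
  have hle : closure (interior (convexHull ℝ (Set.range fun I => q I - 1))) ⊆ {x | f x ≤ 0} :=
    closure_minimal (fun x hx => by simpa using (hf x hx).le)
      (isClosed_le f.continuous continuous_const)
  have := hle hmem
  simp only [Set.mem_ofPred_eq, hz'] at this
  linarith

theorem convexHull_dot_le {n : ℕ} {ι : Type*} (q : ι → Fin n → ℝ) {w y : Fin n → ℝ}
    (hw : w ∈ polarSet q) (hy : y ∈ convexHull ℝ (Set.range fun I => q I - 1)) :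
    w ⬝ᵥ y ≤ 1 := by
  have hconv : Convex ℝ {x : Fin n → ℝ | w ⬝ᵥ x ≤ 1} :=
    convex_halfSpace_le ⟨fun _ _ => dotProduct_add _ _ _, fun _ _ => dotProduct_smul _ _ _⟩ _
  exact convexHull_min (t := {x : Fin n → ℝ | w ⬝ᵥ x ≤ 1})
    (by rintro _ ⟨I, rfl⟩; exact hw I) hconv hy

theorem polarSet_bounded {n : ℕ} {ι : Type*} (q : ι → Fin n → ℝ)
    (h : (0 : Fin n → ℝ) ∈ interior (convexHull ℝ (Set.range fun I => q I - 1))) :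
    ∃ R : ℝ, ∀ w ∈ polarSet q, ∀ i, |w i| ≤ R := by
  obtain ⟨r, hr, hball⟩ := Metric.mem_nhds_iff.1 (mem_interior_iff_mem_nhds.1 h)
  refine ⟨2 / r, fun w hw i => ?_⟩
  have key : ∀ s : ℝ, |s| = r / 2 → s * w i ≤ 1 := by
    intro s hs
    have hmem : (Pi.single i s : Fin n → ℝ) ∈ Metric.ball (0 : Fin n → ℝ) r := by
      rw [mem_ball_zero_iff, Pi.norm_single, Real.norm_eq_abs, hs]
      linarith
    have := convexHull_dot_le q hw (hball hmem)
    rw [dotProduct_single] at this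
    linarith
  have e1 := key (r / 2) (abs_of_pos (by positivity))
  have e2 := key (-(r / 2)) (by rw [abs_neg, abs_of_pos (by positivity)])
  rw [abs_le, le_div_iff₀ hr, neg_le, le_div_iff₀ hr]
  constructor <;> linarith

theorem polarSet_isCompact {n : ℕ} {ι : Type*} (q : ι → Fin n → ℝ)
    (h : (0 : Fin n → ℝ) ∈ interior (convexHull ℝ (Set.range fun I => q I - 1))) :
    IsCompact (polarSet q) := by
  obtain ⟨R, hR⟩ := polarSet_bounded q h
  refine (isCompact_Icc (a := fun _ : Fin n => -R) (b := fun _ => R)).of_isClosed_subset ?_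
    fun w hw => ⟨fun i => (abs_le.1 (hR w hw i)).1, fun i => (abs_le.1 (hR w hw i)).2⟩
  simp only [polarSet, Set.ofPred_forall]
  refine isClosed_iInter fun I => isClosed_le ?_ continuous_const
  unfold dotProduct
  fun_prop

theorem polarSet_convex {n : ℕ} {ι : Type*} (q : ι → Fin n → ℝ) : Convex ℝ (polarSet q) := by
  simp only [polarSet, Set.ofPred_forall]
  exact convex_iInter fun I => convex_halfSpace_le
    ⟨fun _ _ => add_dotProduct _ _ _, fun _ _ => smul_dotProduct _ _ _⟩ _

/-- Hahn-Banach gives a point of the polar that separates `y`, and Krein-Milman an extreme one. -/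
theorem exists_extreme_separating {n : ℕ} {ι : Type*} [Fintype ι] (q : ι → Fin n → ℝ)
    (h : (0 : Fin n → ℝ) ∈ interior (convexHull ℝ (Set.range fun I => q I - 1)))
    {y : Fin n → ℝ} (hy : y ∉ convexHull ℝ (Set.range fun I => q I - 1)) :
    ∃ w ∈ (polarSet q).extremePoints ℝ, 1 < w ⬝ᵥ y := by
  obtain ⟨f, u, hfu, huy⟩ := geometric_hahn_banach_closed_point
    (convex_convexHull ℝ (Set.range fun I => q I - 1)) ((Set.finite_range _).isClosed_convexHull ℝ) hy
  obtain ⟨z, hz⟩ := exists_dotProduct (f : (Fin n → ℝ) →ₗ[ℝ] ℝ)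
  have hz' : ∀ x, f x = z ⬝ᵥ x := hz
  have hu : 0 < u := by simpa using hfu 0 (interior_subset h)
  have hwK : u⁻¹ • z ∈ polarSet q := by
    intro I
    have := hfu _ (subset_convexHull ℝ _ ⟨I, rfl⟩)
    rw [hz'] at this
    rw [smul_dotProduct, smul_eq_mul, inv_mul_le_iff₀ hu]
    linarith
  have hwy : 1 < (u⁻¹ • z) ⬝ᵥ y := by
    rw [smul_dotProduct, smul_eq_mul, lt_inv_mul_iff₀ hu, ← hz']
    linarith
  by_contra! hall
  have hconv : Convex ℝ {w : Fin n → ℝ | w ⬝ᵥ y ≤ 1} :=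
    convex_halfSpace_le ⟨fun _ _ => add_dotProduct _ _ _, fun _ _ => smul_dotProduct _ _ _⟩ _
  have hclosed : IsClosed {w : Fin n → ℝ | w ⬝ᵥ y ≤ 1} := by
    refine isClosed_le ?_ continuous_const
    unfold dotProduct
    fun_prop
  rw [← closure_convexHull_extremePoints (polarSet_isCompact q h) (polarSet_convex q)] at hwK
  exact hwy.not_ge (closure_minimal (convexHull_min hall hconv) hclosed hwK)

theorem exists_integral_description {n : ℕ} {ι : Type*} [Fintype ι] (q : ι → Fin n → ℝ)
    (h : (0 : Fin n → ℝ) ∈ interior (convexHull ℝ (Set.range fun I => q I - 1)))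
    (hext : ∀ w ∈ (polarSet q).extremePoints ℝ, ∃ v : Fin n → ℤ, w = fun i => (v i : ℝ)) :
    ∃ (m : ℕ) (v : Fin m → Fin n → ℤ), convexHull ℝ (Set.range fun I => q I - 1) =
      {y : Fin n → ℝ | ∀ j : Fin m, ∑ i, (v j i : ℝ) * y i ≤ 1} := by
  let W : Set (Fin n → ℤ) := {v | (fun i => (v i : ℝ)) ∈ polarSet q}
  have hW : W.Finite := by
    obtain ⟨R, hR⟩ := polarSet_bounded q h
    refine (Set.finite_Icc (fun _ : Fin n => -⌈R⌉) fun _ => ⌈R⌉).subset fun v hv => ?_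
    have hv' : ∀ i, |v i| ≤ ⌈R⌉ := fun i => by
      have := (hR _ hv i).trans (Int.le_ceil R)
      exact_mod_cast this
    exact ⟨fun i => (abs_le.1 (hv' i)).1, fun i => (abs_le.1 (hv' i)).2⟩
  let e := hW.toFinset.equivFin
  refine ⟨hW.toFinset.card, fun j => (e.symm j).1, Set.Subset.antisymm (fun y hy j => ?_) ?_⟩
  · have hj : (e.symm j).1 ∈ W := hW.mem_toFinset.1 (e.symm j).2
    exact convexHull_dot_le q hj hy
  · intro y hy
    by_contra hnot
    obtain ⟨w, hw, hwy⟩ := exists_extreme_separating q h hnot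
    obtain ⟨v, rfl⟩ := hext w hw
    have h1 := hy (e ⟨v, hW.mem_toFinset.2 hw.1⟩)
    simp only [Equiv.symm_apply_apply] at h1
    exact hwy.not_ge h1

/-- the polytope associated to a type (★) solution of `det D²u = e^{−u}` is a
reflexive lattice polytope: its extreme points (vertices) have integer coordinates, the
origin is an interior point, and it is cut out by inequalities `⟨v_j, y⟩ ≤ 1` with
integer vectors `v_j`. -/
theorem stmt8 {n : ℕ} (hn : 1 ≤ n) (u : (Fin n → ℝ) → ℝ)
    (𝓘 : Finset (Fin n → ℕ)) (a : (Fin n → ℕ) → ℝ)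
    (hu : IsTypeStar u 𝓘 a) (hMA : SatisfiesMA u) :
    (∀ y ∈ Set.extremePoints ℝ (closure (Set.range (gradMap u))),
      ∀ i, ∃ m : ℤ, y i = (m : ℝ)) ∧
    (fun _ => (0 : ℝ)) ∈ interior (closure (Set.range (gradMap u))) ∧
    ∃ (m : ℕ) (v : Fin m → Fin n → ℤ),
      closure (Set.range (gradMap u)) =
        {y : Fin n → ℝ | ∀ j : Fin m, ∑ i, (v j i : ℝ) * y i ≤ 1} := by
  classical
  obtain ⟨hmem, hapos, -, hform⟩ := hu
  let q : 𝓘 → Fin n → ℝ := fun I i => (I.1 i : ℝ)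
  let b : 𝓘 → ℝ := fun I => a I.1
  have hb : ∀ I, 0 < b I := fun I => hapos I.1 I.2
  have hq0 : ∃ I, q I = 0 := ⟨⟨0, hmem 0 (by simp)⟩, by ext i; simp [q]⟩
  have hq1 : ∀ i, ∃ I, q I = Pi.single i 1 := fun i =>
    ⟨⟨Pi.single i 1, hmem _ (by simp)⟩, by ext j; simp [q, Pi.single_apply]⟩
  have : Nonempty 𝓘 := ⟨hq0.choose⟩
  have hub : u = logPot q b := by
    ext x
    rw [hform, logPot, expSum, ← Finset.sum_coe_sort 𝓘]
    rfl
  subst hub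
  obtain ⟨hA, hB⟩ := support_identity q hb hMA
  have hint := zero_mem_interior q (fun z hz => exists_dotProduct_pos q hB hz) hq0 hq1
  rw [closure_range_gradMap q hb]
  refine ⟨fun y hy i => ?_, hint,
    exists_integral_description q hint fun w hw => extreme_integral q hA hq0 hq1 hw⟩
  obtain ⟨I, rfl⟩ := extremePoints_convexHull_subset hy
  exact ⟨I.1 i - 1, by simp [q]⟩
end

section
/- Let n ≥ 1, and let P(x₁,…,xₙ) = Σ_{I∈𝓘} a_I x^I be a polynomial of type (◇). For λ ∈ ℝ, suppose that for all x in the open positive orthant (0,∞)ⁿ one has det M_P(x) = P(x)^{2n − λ/2}, where M_P is the matrix with entries (M_P)_{αβ} = x_α·(P·∂²P/∂x_α∂x_β − (∂P/∂x_α)(∂P/∂x_β)) + δ_{αβ}·P·∂P/∂x_α. If deg P ≥ 1, then λ is a rational number and λ ≥ 2n/deg P > 0. -/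
/-!
The identity is restricted to the diagonal ray `x = (t, …, t)`, `t → ∞`, where both sides become
functions of one variable. Writing `d = deg P` and `s = 2n - λ/2`, positivity of the coefficients
prevents cancellation in top degree, so `P(t, …, t)` is a polynomial in `t` of degree exactly `d`
(`natDegree_diag`). The polynomial `Q = det M_P` restricts to some polynomial `q` of degree `m`,
and `q(t) = P(t, …, t)^s` forces `m = d s` by comparing growth at infinity
(`natDegree_eq_mul_of_eval_eq_rpow`); hence `s`, and so `λ`, is rational. Every entry of `M_P` has
degree at most `2d - 1`, so `m ≤ n (2d - 1)` (`totalDegree_det_MPmat_le`), and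
`d s ≤ n (2d - 1)` rearranges to `λ ≥ 2n / d`.
-/

open Real

/-- `P` is a polynomial of type (◇): every multi-index of length `≤ 1` appears with
coefficient `1`, and every coefficient in the support is positive. -/
def IsTypeDiamond {n : ℕ} (P : MvPolynomial (Fin n) ℝ) : Prop :=
  (∀ d : Fin n →₀ ℕ, (∑ i, d i) ≤ 1 → MvPolynomial.coeff d P = 1) ∧
  (∀ d ∈ P.support, 0 < MvPolynomial.coeff d P)

/-- The matrix `M_P` with entries
`x_α·(P·∂²P/∂x_α∂x_β − ∂P/∂x_α·∂P/∂x_β) + δ_{αβ}·P·∂P/∂x_α`. -/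
noncomputable def MPmat {n : ℕ} (P : MvPolynomial (Fin n) ℝ) :
    Matrix (Fin n) (Fin n) (MvPolynomial (Fin n) ℝ) :=
  Matrix.of fun α β =>
    MvPolynomial.X α *
        (P * MvPolynomial.pderiv β (MvPolynomial.pderiv α P) -
          MvPolynomial.pderiv α P * MvPolynomial.pderiv β P) +
      (if α = β then P * MvPolynomial.pderiv α P else 0)

open MvPolynomial in
theorem totalDegree_pderiv_le {n : ℕ} (i : Fin n) (p : MvPolynomial (Fin n) ℝ) :
    (pderiv i p).totalDegree ≤ p.totalDegree - 1 := by
  rw [totalDegree_eq]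
  refine Finset.sup_le fun m hm => ?_
  rw [mem_support_iff, coeff_pderiv] at hm
  have h := le_totalDegree (mem_support_iff.2 (left_ne_zero_of_mul hm))
  rw [Finsupp.sum_add_index' (by simp) (by simp), Finsupp.sum_single_index rfl] at h
  rw [Finsupp.card_toMultiset]
  have : (m.sum fun _ => id) = m.sum fun _ e => e := rfl
  omega

/-- When `deg P = 1` the second derivatives vanish, so the bound holds with no truncation
problem in `deg P - 1`. -/
theorem totalDegree_X_mul_pderiv_pderiv_le {n : ℕ} (α β : Fin n) (P : MvPolynomial (Fin n) ℝ) :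
    (MvPolynomial.X α * MvPolynomial.pderiv β (MvPolynomial.pderiv α P)).totalDegree
      ≤ P.totalDegree - 1 := by
  have h1 := totalDegree_pderiv_le α P
  have h2 := totalDegree_pderiv_le β (MvPolynomial.pderiv α P)
  by_cases hd : (MvPolynomial.pderiv α P).totalDegree = 0
  · rw [MvPolynomial.totalDegree_eq_zero_iff_eq_C] at hd
    rw [hd, MvPolynomial.pderiv_C]
    simp
  · have h3 := MvPolynomial.totalDegree_mul (MvPolynomial.X α)
      (MvPolynomial.pderiv β (MvPolynomial.pderiv α P))
    rw [MvPolynomial.totalDegree_X] at h3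
    omega

theorem totalDegree_MPmat_le {n : ℕ} (P : MvPolynomial (Fin n) ℝ) (hdeg : 1 ≤ P.totalDegree)
    (α β : Fin n) : (MPmat P α β).totalDegree ≤ 2 * P.totalDegree - 1 := by
  have hα := totalDegree_pderiv_le α P
  have hβ := totalDegree_pderiv_le β P
  have h2 := totalDegree_X_mul_pderiv_pderiv_le α β P
  simp only [MPmat, Matrix.of_apply]
  refine (MvPolynomial.totalDegree_add _ _).trans (max_le ?_ ?_)
  · rw [mul_sub]
    refine (MvPolynomial.totalDegree_sub _ _).trans (max_le ?_ ?_)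
    · rw [mul_left_comm]
      refine (MvPolynomial.totalDegree_mul _ _).trans ?_
      omega
    · refine (MvPolynomial.totalDegree_mul _ _).trans ?_
      have h3 := MvPolynomial.totalDegree_mul (MvPolynomial.pderiv α P)
        (MvPolynomial.pderiv β P)
      rw [MvPolynomial.totalDegree_X]
      omega
  · split_ifs
    · refine (MvPolynomial.totalDegree_mul _ _).trans ?_
      omega
    · simp

theorem totalDegree_det_MPmat_le {n : ℕ} (P : MvPolynomial (Fin n) ℝ)
    (hdeg : 1 ≤ P.totalDegree) :
    (MPmat P).det.totalDegree ≤ n * (2 * P.totalDegree - 1) := by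
  rw [Matrix.det_apply]
  refine MvPolynomial.totalDegree_finsetSum_le fun σ _ => ?_
  refine (MvPolynomial.totalDegree_smul_le _ _).trans ?_
  refine (MvPolynomial.totalDegree_finsetProd _ _).trans ?_
  refine (Finset.sum_le_card_nsmul _ _ _ fun i _ => totalDegree_MPmat_le P hdeg _ _).trans ?_
  simp

/-- The restriction `t ↦ Q(t, …, t)` of a polynomial to the diagonal. -/
noncomputable def diag {n : ℕ} (Q : MvPolynomial (Fin n) ℝ) : Polynomial ℝ :=
  MvPolynomial.aeval (fun _ => Polynomial.X) Q

theorem eval_diag {n : ℕ} (Q : MvPolynomial (Fin n) ℝ) (t : ℝ) :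
    (diag Q).eval t = MvPolynomial.eval (fun _ => t) Q := by
  rw [diag, ← Polynomial.coe_evalRingHom, MvPolynomial.aeval_def, MvPolynomial.hom_eval₂]
  simp only [Polynomial.coe_evalRingHom, Polynomial.eval_X]
  rw [MvPolynomial.eval, MvPolynomial.coe_eval₂Hom]
  congr 1
  ext a
  simp

theorem natDegree_diag_le {n : ℕ} (Q : MvPolynomial (Fin n) ℝ) :
    (diag Q).natDegree ≤ Q.totalDegree := by
  simpa [diag] using MvPolynomial.aeval_natDegree_le Q le_rfl (fun _ => Polynomial.X)
    (fun _ => Polynomial.natDegree_X_le)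

/-- Coefficients of the same total degree add up on the diagonal, so when they are all positive
the degree does not drop. -/
theorem natDegree_diag {n : ℕ} (P : MvPolynomial (Fin n) ℝ) (h0 : P ≠ 0)
    (hP : ∀ d ∈ P.support, 0 < MvPolynomial.coeff d P) :
    (diag P).natDegree = P.totalDegree := by
  refine le_antisymm (natDegree_diag_le P) (Polynomial.le_natDegree_of_ne_zero ?_)
  have hcoeff : (diag P).coeff P.totalDegree = ∑ d ∈ P.support,
      if P.totalDegree = ∑ i, d i then MvPolynomial.coeff d P else 0 := by
    rw [diag, MvPolynomial.aeval_def, MvPolynomial.eval₂_eq', Polynomial.finsetSum_coeff]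
    refine Finset.sum_congr rfl fun d _ => ?_
    rw [Finset.prod_pow_eq_pow_sum, ← Polynomial.C_eq_algebraMap, Polynomial.coeff_C_mul_X_pow]
  rw [hcoeff]
  obtain ⟨d, hd, hmax⟩ := Finset.exists_mem_eq_sup P.support
    (MvPolynomial.support_nonempty.2 h0) (fun s => s.sum fun _ e => e)
  have hmax' : P.totalDegree = ∑ i, d i := by
    rw [MvPolynomial.totalDegree, hmax, Finsupp.sum_fintype _ _ (by simp)]
  refine (Finset.sum_pos' (fun e he => ?_) ⟨d, hd, ?_⟩).ne'
  · split_ifs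
    exacts [(hP e he).le, le_rfl]
  · rw [if_pos hmax']
    exact hP d hd

open Filter Topology in
theorem tendsto_eval_div_pow_natDegree (p : Polynomial ℝ) :
    Tendsto (fun t => p.eval t / t ^ p.natDegree) atTop (𝓝 p.leadingCoeff) := by
  by_cases hp : p = 0
  · simp [hp]
  have h := Polynomial.div_tendsto_atTop_leadingCoeff_div_of_degree_eq p
    (Polynomial.X ^ p.natDegree) (by
      rw [Polynomial.degree_X_pow, Polynomial.degree_eq_natDegree hp])
  simpa using h

open Filter Topology in
/-- If `t ^ a` has a nonzero limit at infinity, then `a = 0`. -/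
theorem eq_zero_of_tendsto_rpow {a c : ℝ} (hc : c ≠ 0)
    (h : Tendsto (fun t : ℝ => t ^ a) atTop (𝓝 c)) : a = 0 := by
  rcases lt_trichotomy a 0 with ha | ha | ha
  · have h2 := tendsto_rpow_neg_atTop (neg_pos.2 ha)
    rw [neg_neg] at h2
    exact absurd (tendsto_nhds_unique h h2) hc
  · exact ha
  · exact absurd h (not_tendsto_nhds_of_tendsto_atTop (tendsto_rpow_atTop ha) c)

open Filter Topology in
/-- If `q = p ^ s` on the positive half-line, comparing growth at infinity gives
`deg q = s * deg p`. -/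
theorem natDegree_eq_mul_of_eval_eq_rpow (p q : Polynomial ℝ) (s : ℝ)
    (hp : ∀ t : ℝ, 0 < t → 0 < p.eval t)
    (h : ∀ t : ℝ, 0 < t → q.eval t = p.eval t ^ s) :
    (q.natDegree : ℝ) = p.natDegree * s := by
  have hp0 : p ≠ 0 := by
    rintro rfl
    simpa using hp 1 one_pos
  have hq0 : q ≠ 0 := by
    rintro rfl
    have h1 := Real.rpow_pos_of_pos (hp 1 one_pos) s
    rw [← h 1 one_pos] at h1
    simp at h1
  have hpl := Polynomial.leadingCoeff_ne_zero.2 hp0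
  have hql := Polynomial.leadingCoeff_ne_zero.2 hq0
  have hpl' : 0 < p.leadingCoeff := by
    refine lt_of_le_of_ne (ge_of_tendsto (tendsto_eval_div_pow_natDegree p) ?_) hpl.symm
    filter_upwards [eventually_gt_atTop 0] with t ht
    have := hp t ht
    positivity
  have hlim := ((tendsto_eval_div_pow_natDegree p).rpow_const (p := s) (Or.inl hpl)).div
    (tendsto_eval_div_pow_natDegree q) hql
  refine sub_eq_zero.1 (eq_zero_of_tendsto_rpow
    (div_ne_zero (Real.rpow_pos_of_pos hpl' s).ne' hql) (hlim.congr' ?_))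
  filter_upwards [eventually_gt_atTop 0] with t ht
  have hpt := hp t ht
  have hps := Real.rpow_pos_of_pos hpt s
  simp only [Pi.div_apply]
  rw [h t ht, Real.div_rpow hpt.le (by positivity), Real.rpow_sub ht, Real.rpow_mul ht.le,
    Real.rpow_natCast, Real.rpow_natCast]
  have h3 : 0 < (t ^ p.natDegree) ^ s := by positivity
  field_simp

/-- if a polynomial `P` of type (◇) satisfies `det M_P = P^{2n − λ/2}` on the
open positive orthant and `deg P ≥ 1`, then `λ` is rational and `λ ≥ 2n/deg P > 0`. -/
theorem stmt9 {n : ℕ} (hn : 1 ≤ n) (P : MvPolynomial (Fin n) ℝ) (hP : IsTypeDiamond P)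
    (lam : ℝ)
    (heq : ∀ x : Fin n → ℝ, (∀ i, 0 < x i) →
      MvPolynomial.eval x (MPmat P).det =
        (MvPolynomial.eval x P) ^ ((2 * n : ℝ) - lam / 2))
    (hdeg : 1 ≤ P.totalDegree) :
    (∃ r : ℚ, lam = (r : ℝ)) ∧
    (2 * n : ℝ) / (P.totalDegree : ℝ) ≤ lam ∧
    0 < (2 * n : ℝ) / (P.totalDegree : ℝ) := by
  have h0 : P ≠ 0 := by
    rintro rfl
    simp at hdeg
  have hpos : ∀ t : ℝ, 0 < t → 0 < (diag P).eval t := by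
    intro t ht
    rw [eval_diag, MvPolynomial.eval_eq']
    refine Finset.sum_pos (fun d hd => mul_pos (hP.2 d hd) ?_)
      (MvPolynomial.support_nonempty.2 h0)
    exact Finset.prod_pos fun i _ => pow_pos ht _
  have hs := natDegree_eq_mul_of_eval_eq_rpow (diag P) (diag (MPmat P).det) _ hpos
    (fun t ht => by simpa only [eval_diag] using heq (fun _ => t) fun _ => ht)
  rw [natDegree_diag P h0 hP.2] at hs
  have hle := (natDegree_diag_le _).trans (totalDegree_det_MPmat_le P hdeg)
  generalize (diag (MPmat P).det).natDegree = m at hs hle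
  have hd : (0 : ℝ) < P.totalDegree := by exact_mod_cast hdeg
  have hn' : (0 : ℝ) < n := by exact_mod_cast hn
  have hle' : (m : ℝ) ≤ n * (2 * P.totalDegree - 1) := by
    have h1 : ((n * (2 * P.totalDegree - 1) : ℕ) : ℝ) = n * (2 * P.totalDegree - 1) := by
      rw [Nat.cast_mul, Nat.cast_sub (by omega)]
      push_cast
      ring
    rw [← h1]
    exact_mod_cast hle
  refine ⟨⟨4 * n - 2 * m / P.totalDegree, ?_⟩, ?_, by positivity⟩
  · push_cast
    rw [hs]
    field_simp
    ring
  · rw [div_le_iff₀ hd]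
    nlinarith
end

section
/- Let n ≥ 1 and let s be a positive integer. If R is a polynomial of type (◇) in n variables satisfying det M_R = R^{2n−s} as an identity of polynomials, then P(x₁,…,xₙ) := R(x₁/s,…,xₙ/s)^s is a polynomial of type (◇) satisfying det M_P = P^{2n−1} as an identity of polynomials. -/
/-!
Put `c = 1/s`, let `φ` be the rescaling `f(x) ↦ f(c x)`, and let `Q = φ R`, so `P = Q ^ s`.

The chain rule `∂_α (φ f) = c φ(∂_α f)`, together with `φ(x_α) = c x_α`,
gives `M_Q = c φ(M_R)` (`MPmat_rescale`).  The matrix `M_f` is `f²` times the logarithmic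
expression `x_α ∂_α ∂_β log f + δ_{αβ} ∂_α log f`, which is linear in `log f`; hence
`M_{Q^s} = s Q^{2(s-1)} M_Q` (`MPmat_pow`).  As `s c = 1`, the scalar factors cancel and
`det M_P = Q^{2(s-1)n} φ(det M_R)`.  Multiplying by `Q^s = φ(R)^s` and using the hypothesis on `R`
gives `det M_P · Q^s = Q^{2sn}`, and one cancels `Q^s ≠ 0`.

For type (◇): rescaling multiplies the coefficient at `d` by `c^|d|` (`coeff_rescale`), products
preserve nonnegativity of coefficients, and the linear coefficients of `Q^s` are `s · c = 1`
because the constant term of `Q` is `1`.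
-/

open Real

open MvPolynomial

/-- The substitution `f(x) ↦ f(c x)`, as an algebra endomorphism. -/
noncomputable def rescale {n : ℕ} (c : ℝ) :
    MvPolynomial (Fin n) ℝ →ₐ[ℝ] MvPolynomial (Fin n) ℝ :=
  aeval (fun i => C c * X i)

lemma coeff_rescale {n : ℕ} (c : ℝ) (f : MvPolynomial (Fin n) ℝ) (d : Fin n →₀ ℕ) :
    coeff d (rescale c f) = c ^ (∑ i, d i) * coeff d f := by
  induction f using MvPolynomial.induction_on' with
  | add p q hp hq => rw [map_add, coeff_add, coeff_add, hp, hq]; ring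
  | monomial e a =>
    have h : rescale c (monomial e a) = monomial e (c ^ (∑ i, e i) * a) := by
      rw [rescale, aeval_monomial, Finsupp.prod_fintype _ _ (by simp)]
      simp only [mul_pow, Finset.prod_mul_distrib]
      rw [Finset.prod_pow_eq_pow_sum, ← C_pow, monomial_eq, Finsupp.prod_fintype _ _ (by simp), C_mul, algebraMap_eq]
      ring
    rw [h, coeff_monomial, coeff_monomial]
    split_ifs with hd
    · rw [hd]
    · simp

lemma pderiv_rescale {n : ℕ} (c : ℝ) (i : Fin n) (f : MvPolynomial (Fin n) ℝ) :
    pderiv i (rescale c f) = C c * rescale c (pderiv i f) := by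
  induction f using MvPolynomial.induction_on with
  | C a => simp [rescale]
  | add p q hp hq => simp only [map_add, hp, hq]; ring
  | mul_X p j hp =>
    have hX : rescale c (X j : MvPolynomial (Fin n) ℝ) = C c * X j := by simp [rescale]
    simp only [map_mul, map_add, Derivation.leibniz, smul_eq_mul, hp, hX, pderiv_C, pderiv_X]
    by_cases h : i = j
    · subst h; simp; ring
    · simp [h]; ring

lemma MPmat_rescale {n : ℕ} (c : ℝ) (f : MvPolynomial (Fin n) ℝ) :
    MPmat (rescale c f) = (C c : MvPolynomial (Fin n) ℝ) • (rescale c).mapMatrix (MPmat f) := by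
  ext1 α β
  have hX : rescale c (X α : MvPolynomial (Fin n) ℝ) = C c * X α := by simp [rescale]
  have hC : ∀ i : Fin n, pderiv i (C c : MvPolynomial (Fin n) ℝ) = 0 := fun i => pderiv_C
  simp only [MPmat, Matrix.of_apply, Matrix.smul_apply, AlgHom.mapMatrix_apply, Matrix.map_apply,
    smul_eq_mul, map_add, map_mul, map_sub, pderiv_rescale, Derivation.leibniz, hC, hX]
  split_ifs
  · simp only [map_mul]; ring
  · simp only [map_zero]; ring

lemma MPmat_pow {n : ℕ} (t : ℕ) (f : MvPolynomial (Fin n) ℝ) :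
    MPmat (f ^ (t + 1)) = (C ((t + 1 : ℕ) : ℝ) * f ^ (2 * t)) • MPmat f := by
  have hd : ∀ (i : Fin n) (k : ℕ), f * pderiv i (f ^ k) = (k : MvPolynomial (Fin n) ℝ) *
      f ^ k * pderiv i f := by
    intro i k
    induction k with
    | zero => simp
    | succ k ih =>
      rw [pow_succ, Derivation.leibniz]
      simp only [smul_eq_mul]
      push_cast
      linear_combination f * ih
  have hd' : ∀ i : Fin n, pderiv i (f ^ (t + 1)) =
      ((t : MvPolynomial (Fin n) ℝ) + 1) * f ^ t * pderiv i f := by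
    intro i
    rw [pow_succ, Derivation.leibniz]
    simp only [smul_eq_mul]
    linear_combination hd i t
  have hc : ∀ i : Fin n, pderiv i ((t : MvPolynomial (Fin n) ℝ) + 1) = 0 := by
    intro i
    simp
  ext1 α β
  have hβ := hd β t
  simp only [MPmat, Matrix.of_apply, Matrix.smul_apply, smul_eq_mul, hd', Derivation.leibniz, hc]
  have hcast : (C ((t + 1 : ℕ) : ℝ) : MvPolynomial (Fin n) ℝ) = t + 1 := by simp
  rw [hcast]
  split_ifs
  · linear_combination X α * f ^ t * (t + 1) * pderiv α f * hβ
  · linear_combination X α * f ^ t * (t + 1) * pderiv α f * hβ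

lemma coeff_pow_nonneg {n : ℕ} {f : MvPolynomial (Fin n) ℝ} (hf : ∀ d, 0 ≤ coeff d f)
    (k : ℕ) (d : Fin n →₀ ℕ) : 0 ≤ coeff d (f ^ k) := by
  classical
  induction k generalizing d with
  | zero => rw [pow_zero, coeff_one]; split_ifs <;> norm_num
  | succ k ih =>
    rw [pow_succ, coeff_mul]
    exact Finset.sum_nonneg fun p _ => mul_nonneg (ih _) (hf _)

/-- With constant term `1`, linear coefficients behave additively under products. -/
lemma coeff_single_pow {n : ℕ} {f : MvPolynomial (Fin n) ℝ} (hf : coeff 0 f = 1) (i : Fin n)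
    (k : ℕ) : coeff (Finsupp.single i 1) (f ^ k) = k * coeff (Finsupp.single i 1) f := by
  classical
  induction k with
  | zero => simp [coeff_one, eq_comm]
  | succ k ih =>
    have h0 : coeff 0 (f ^ k) = 1 := by
      rw [← constantCoeff_eq, map_pow, constantCoeff_eq, hf, one_pow]
    rw [pow_succ, coeff_mul, Finsupp.antidiagonal_single]
    simp [Finset.Nat.antidiagonal_succ, ih, h0, hf]
    ring

lemma eq_zero_or_single {n : ℕ} {d : Fin n →₀ ℕ} (hd : (∑ i, d i) ≤ 1) :
    d = 0 ∨ ∃ i, d = Finsupp.single i 1 := by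
  by_cases h : d = 0
  · exact Or.inl h
  · right
    obtain ⟨i, hi⟩ := Finsupp.ne_iff.1 h
    refine ⟨i, ?_⟩
    rw [← Finset.add_sum_erase _ _ (Finset.mem_univ i)] at hd
    have hi' : d i ≠ 0 := hi
    have h0 : ∑ x ∈ Finset.univ.erase i, d x = 0 := by omega
    rw [Finset.sum_eq_zero_iff] at h0
    ext j
    by_cases hj : j = i
    · subst hj; simp; omega
    · rw [Finsupp.single_eq_of_ne hj]; exact h0 j (by simp [hj])

/-- if `R` of type (◇) satisfies `det M_R = R^{2n−s}` as an identity of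
polynomials (written here as `det M_R · R^s = R^{2n}`), then `P(x) := R(x/s)^s` is a
polynomial of type (◇) satisfying `det M_P = P^{2n−1}` as an identity of polynomials. -/
theorem stmt11 {n : ℕ} (hn : 1 ≤ n) (s : ℕ) (hs : 0 < s)
    (R : MvPolynomial (Fin n) ℝ) (hR : IsTypeDiamond R)
    (heq : (MPmat R).det * R ^ s = R ^ (2 * n))
    (P : MvPolynomial (Fin n) ℝ)
    (hPdef : P = (MvPolynomial.aeval
      (fun i => MvPolynomial.C ((s : ℝ)⁻¹) * MvPolynomial.X i) R) ^ s) :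
    IsTypeDiamond P ∧ (MPmat P).det = P ^ (2 * n - 1) := by
  obtain ⟨hR1, hR2⟩ := hR
  have hs0 : (s : ℝ) ≠ 0 := by positivity
  set Q := rescale ((s : ℝ)⁻¹) R with hQ
  replace hPdef : P = Q ^ s := hPdef
  have hQ0 : coeff 0 Q = 1 := by simp [hQ, coeff_rescale, hR1]
  have hQ1 : ∀ i, coeff (Finsupp.single i 1) Q = (s : ℝ)⁻¹ := by
    intro i
    have h1 : ∑ j, (Finsupp.single i 1 : Fin n →₀ ℕ) j = 1 := by
      simp [Finsupp.single_apply]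
    rw [hQ, coeff_rescale, hR1 _ h1.le, h1]
    simp
  have hQnn : ∀ d, 0 ≤ coeff d Q := by
    intro d
    rw [hQ, coeff_rescale]
    refine mul_nonneg (by positivity) ?_
    by_cases h : coeff d R = 0
    · exact h.ge
    · exact (hR2 d (mem_support_iff.2 h)).le
  have hQne : Q ≠ 0 := by
    intro h
    simp [h] at hQ0
  refine ⟨⟨fun d hd => ?_, fun d hd => ?_⟩, ?_⟩
  · rw [hPdef]
    obtain rfl | ⟨i, rfl⟩ := eq_zero_or_single hd
    · rw [← constantCoeff_eq, map_pow, constantCoeff_eq, hQ0, one_pow]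
    · rw [coeff_single_pow hQ0, hQ1, mul_inv_cancel₀ hs0]
  · rw [mem_support_iff] at hd
    refine lt_of_le_of_ne ?_ hd.symm
    rw [hPdef]
    exact coeff_pow_nonneg hQnn s d
  · obtain ⟨t, rfl⟩ : ∃ t, s = t + 1 := ⟨s - 1, by omega⟩
    obtain ⟨m, rfl⟩ : ∃ m, n = m + 1 := ⟨n - 1, by omega⟩
    have hM : MPmat P = Q ^ (2 * t) • (rescale (((t + 1 : ℕ) : ℝ)⁻¹)).mapMatrix (MPmat R) := by
      rw [hPdef, MPmat_pow, hQ, MPmat_rescale, smul_smul]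
      congr 1
      rw [mul_right_comm, ← C_mul, mul_inv_cancel₀ hs0, C_1, one_mul]
    have hφ := congrArg (rescale (((t + 1 : ℕ) : ℝ)⁻¹)) heq
    rw [map_mul, map_pow, map_pow, ← hQ] at hφ
    -- the hypothesis gives `det M_P · Q^s = Q^{2sn}`, from which `Q^s` is cancelled
    refine mul_right_cancel₀ (pow_ne_zero (t + 1) hQne) ?_
    rw [hM, Matrix.det_smul, ← AlgHom.map_det, mul_assoc, hφ, hPdef, Fintype.card_fin,
      ← pow_mul, ← pow_mul, ← pow_add, ← pow_add]
    congr 1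
    have : 2 * (m + 1) - 1 = 2 * m + 1 := by omega
    rw [this]
    ring
end

section
/- Let n ≥ 1 and let P be a polynomial of type (◇) in n variables. Then P satisfies det M_P = P^{2n−1} on the open positive orthant (0,∞)ⁿ if and only if the function u : ℝⁿ → ℝ defined by u(x₁,…,xₙ) = log P(e^{x₁},…,e^{xₙ}) − Σ_{i=1}^n x_i (which is a function of type (★)) satisfies det D²u = e^{−u} on ℝⁿ. -/
/-!
The equivalence is the logarithmic change of variables `y = exp x`, a bijection from `ℝⁿ` onto the
open positive orthant. By the chain rule (`hasFDerivAt_evalExp`) every polynomial `Q` satisfies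
`∂ᵢ (Q (exp x)) = yᵢ · (∂Q/∂yᵢ)(y)`. Applied twice to `u`, this gives
`(D²u)ᵢⱼ = yⱼ · (M_P)ᵢⱼ(y) / P(y)²` (`hessMat_eq`), hence
`det D²u = (∏ yᵢ) · det M_P(y) / P(y)^{2n}`. On the other hand `e^{-u} = (∏ yᵢ) / P(y)`. As
`P(y) > 0`, the two sides agree at `x` exactly when `det M_P(y) = P(y)^{2n-1}`.
-/

open Real Filter MeasureTheory

/-- Evaluation of `Q` at `(e^{x₁}, …, e^{xₙ})`. -/
noncomputable def evalExp {n : ℕ} (Q : MvPolynomial (Fin n) ℝ) (x : Fin n → ℝ) : ℝ :=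
  MvPolynomial.eval (fun i => Real.exp (x i)) Q

theorem hasFDerivAt_evalExp {n : ℕ} (Q : MvPolynomial (Fin n) ℝ) (x : Fin n → ℝ) :
    HasFDerivAt (evalExp Q)
      (∑ i, (Real.exp (x i) * evalExp (MvPolynomial.pderiv i Q) x) •
        (ContinuousLinearMap.proj i : (Fin n → ℝ) →L[ℝ] ℝ)) x := by
  induction Q using MvPolynomial.induction_on with
  | C a =>
    have hfun : evalExp (MvPolynomial.C a) = fun _ : Fin n → ℝ => a := by
      ext z
      simp [evalExp]
    rw [hfun]
    refine (hasFDerivAt_const a x).congr_fderiv ?_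
    simp [evalExp]
  | add p q hp hq =>
    have hfun : evalExp (p + q) = evalExp p + evalExp q := by
      ext z
      simp [evalExp]
    rw [hfun]
    refine (hp.add hq).congr_fderiv ?_
    rw [← Finset.sum_add_distrib]
    refine Finset.sum_congr rfl fun i _ => ?_
    rw [← add_smul, ← mul_add]
    simp [evalExp]
  | mul_X p k hp =>
    have hfun : evalExp (p * MvPolynomial.X k) = fun z => evalExp p z * Real.exp (z k) := by
      ext z
      simp [evalExp]
    have hk : HasFDerivAt (fun z : Fin n → ℝ => Real.exp (z k))
        (Real.exp (x k) • (ContinuousLinearMap.proj k : (Fin n → ℝ) →L[ℝ] ℝ)) x :=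
      ((ContinuousLinearMap.proj k : (Fin n → ℝ) →L[ℝ] ℝ).hasFDerivAt (x := x)).exp
    rw [hfun]
    refine (hp.mul hk).congr_fderiv ?_
    ext v
    simp only [evalExp, MvPolynomial.pderiv_mul, MvPolynomial.pderiv_X, map_add, map_mul,
      MvPolynomial.eval_X, add_apply, smul_apply,
      sum_apply, ContinuousLinearMap.proj_apply, smul_eq_mul, mul_add, add_mul,
      Finset.sum_add_distrib, Finset.mul_sum]
    rw [add_comm]
    congr 1
    · exact Finset.sum_congr rfl fun i _ => by ring
    · rw [Finset.sum_eq_single k]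
      · simp
        ring
      · intro i _ hik
        simp [Pi.single_eq_of_ne' hik]
      · simp

theorem pderivAt_evalExp {n : ℕ} (Q : MvPolynomial (Fin n) ℝ) (i : Fin n) (x : Fin n → ℝ) :
    pderivAt (evalExp Q) i x = Real.exp (x i) * evalExp (MvPolynomial.pderiv i Q) x := by
  rw [pderivAt, (hasFDerivAt_evalExp Q x).fderiv]
  simp [Pi.single_apply]

/-- The constant term of `P` is positive and all its terms are nonnegative. -/
theorem IsTypeDiamond.evalExp_pos {n : ℕ} {P : MvPolynomial (Fin n) ℝ} (hP : IsTypeDiamond P)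
    (x : Fin n → ℝ) : 0 < evalExp P x := by
  rw [evalExp, MvPolynomial.eval_eq']
  refine Finset.sum_pos (fun d hd => mul_pos (hP.2 d hd)
    (Finset.prod_pos fun i _ => pow_pos (Real.exp_pos _) _)) ⟨0, ?_⟩
  rw [MvPolynomial.mem_support_iff, hP.1 0 (by simp)]
  exact one_ne_zero

theorem pderivAt_log_evalExp_sub {n : ℕ} {P : MvPolynomial (Fin n) ℝ} (hP : IsTypeDiamond P)
    (j : Fin n) (x : Fin n → ℝ) :
    pderivAt (fun x => Real.log (evalExp P x) - ∑ i, x i) j x =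
      evalExp (MvPolynomial.X j * MvPolynomial.pderiv j P) x / evalExp P x - 1 := by
  have hsum : HasFDerivAt (fun x : Fin n → ℝ => ∑ i, x i)
      (∑ i, (ContinuousLinearMap.proj i : (Fin n → ℝ) →L[ℝ] ℝ)) x :=
    HasFDerivAt.fun_sum fun i _ => (ContinuousLinearMap.proj i : (Fin n → ℝ) →L[ℝ] ℝ).hasFDerivAt
  have h : HasFDerivAt (fun x => Real.log (evalExp P x) - ∑ i, x i) _ x :=
    ((hasFDerivAt_evalExp P x).log (hP.evalExp_pos x).ne').sub hsum
  have hq := pderivAt_evalExp P j x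
  rw [pderivAt, (hasFDerivAt_evalExp P x).fderiv] at hq
  rw [pderivAt, HasFDerivAt.fderiv h, sub_apply,
    smul_apply, hq]
  simp [Pi.single_apply, evalExp]
  ring

theorem pderiv_pderiv_comm {n : ℕ} (i j : Fin n) (P : MvPolynomial (Fin n) ℝ) :
    MvPolynomial.pderiv i (MvPolynomial.pderiv j P) =
      MvPolynomial.pderiv j (MvPolynomial.pderiv i P) := by
  let D (k : Fin n) : Derivation ℝ (MvPolynomial (Fin n) ℝ) (MvPolynomial (Fin n) ℝ) :=
    MvPolynomial.pderiv k
  -- The commutator is a derivation, so its vanishing can be checked on the variables.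
  have h0 : ⁅D i, D j⁆ = 0 := by
    refine MvPolynomial.derivation_ext fun k => ?_
    rw [Derivation.commutator_apply]
    simp [D, MvPolynomial.pderiv_X, Pi.single_apply, apply_ite]
  have h1 := DFunLike.congr_fun h0 P
  rwa [Derivation.commutator_apply, Derivation.zero_apply, sub_eq_zero] at h1

theorem hessMat_eq_s12 {n : ℕ} {P : MvPolynomial (Fin n) ℝ} (hP : IsTypeDiamond P)
    (x : Fin n → ℝ) :
    hessMat (fun x => Real.log (evalExp P x) - ∑ i, x i) x =
      Matrix.of fun i j => Real.exp (x j) *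
        (((evalExp P x ^ 2)⁻¹ •
          (MvPolynomial.eval fun k => Real.exp (x k)).mapMatrix (MPmat P)) i j) := by
  ext i j
  have hpos := hP.evalExp_pos x
  have hfun : pderivAt (fun x => Real.log (evalExp P x) - ∑ i, x i) j = fun x =>
      evalExp (MvPolynomial.X j * MvPolynomial.pderiv j P) x * (evalExp P x)⁻¹ - 1 :=
    funext fun x => by rw [pderivAt_log_evalExp_sub hP j x, div_eq_mul_inv]
  have hinv := (hasDerivAt_inv hpos.ne').comp_hasFDerivAt x (hasFDerivAt_evalExp P x)
  have h : HasFDerivAt (fun x =>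
      evalExp (MvPolynomial.X j * MvPolynomial.pderiv j P) x * (evalExp P x)⁻¹ - 1) _ x :=
    ((hasFDerivAt_evalExp (MvPolynomial.X j * MvPolynomial.pderiv j P) x).mul hinv).sub_const 1
  have hq := pderivAt_evalExp P i x
  rw [pderivAt, (hasFDerivAt_evalExp P x).fderiv] at hq
  have hr := pderivAt_evalExp (MvPolynomial.X j * MvPolynomial.pderiv j P) i x
  rw [pderivAt, (hasFDerivAt_evalExp _ x).fderiv] at hr
  have hcomm : MvPolynomial.pderiv j (MvPolynomial.pderiv i P) =
      MvPolynomial.pderiv i (MvPolynomial.pderiv j P) := pderiv_pderiv_comm j i P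
  rw [hessMat, Matrix.of_apply, Matrix.of_apply, hfun, pderivAt, HasFDerivAt.fderiv h,
    add_apply, smul_apply,
    smul_apply, smul_apply, hq, hr]
  simp only [Matrix.smul_apply, RingHom.mapMatrix_apply, Matrix.map_apply, MPmat,
    Matrix.of_apply, hcomm, Function.comp_apply, smul_eq_mul]
  have hPe : MvPolynomial.eval (fun k => Real.exp (x k)) P = evalExp P x := rfl
  by_cases hij : i = j
  · subst hij
    simp only [evalExp, MvPolynomial.pderiv_mul, MvPolynomial.pderiv_X_self, map_add, map_mul,
      map_sub, MvPolynomial.eval_X, map_one, if_true]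
    rw [hPe]
    field_simp
    ring
  · have hXj : MvPolynomial.pderiv i (MvPolynomial.X j : MvPolynomial (Fin n) ℝ) = 0 :=
      MvPolynomial.pderiv_X_of_ne (Ne.symm hij)
    simp only [evalExp, MvPolynomial.pderiv_mul, hXj, map_add, map_mul,
      map_sub, MvPolynomial.eval_X, map_zero, if_neg hij]
    rw [hPe]
    field_simp
    ring

theorem det_hessMat_eq {n : ℕ} {P : MvPolynomial (Fin n) ℝ} (hP : IsTypeDiamond P)
    (x : Fin n → ℝ) :
    (hessMat (fun x => Real.log (evalExp P x) - ∑ i, x i) x).det =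
      (∏ i, Real.exp (x i)) * (((evalExp P x ^ 2)⁻¹) ^ n *
        MvPolynomial.eval (fun i => Real.exp (x i)) (MPmat P).det) := by
  rw [hessMat_eq_s12 hP x, Matrix.det_mul_row, Matrix.det_smul, Fintype.card_fin, RingHom.map_det]

/-- Pointwise form of the equivalence, at corresponding points `x` and `exp x`. -/
theorem det_hessMat_eq_iff {n : ℕ} (hn : 1 ≤ n) {P : MvPolynomial (Fin n) ℝ}
    (hP : IsTypeDiamond P) (x : Fin n → ℝ) :
    (hessMat (fun x => Real.log (evalExp P x) - ∑ i, x i) x).det =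
        Real.exp (-(Real.log (evalExp P x) - ∑ i, x i)) ↔
      MvPolynomial.eval (fun i => Real.exp (x i)) (MPmat P).det = evalExp P x ^ (2 * n - 1) := by
  have hpos := hP.evalExp_pos x
  have hprod : (∏ i, Real.exp (x i)) ≠ 0 := (Finset.prod_pos fun i _ => Real.exp_pos _).ne'
  rw [det_hessMat_eq hP x, neg_sub, Real.exp_sub, Real.exp_log hpos, Real.exp_sum, div_eq_mul_inv,
    mul_right_inj' hprod, inv_pow, ← pow_mul, inv_mul_eq_iff_eq_mul₀ (pow_ne_zero _ hpos.ne')]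
  have hpow : evalExp P x ^ (2 * n) * (evalExp P x)⁻¹ = evalExp P x ^ (2 * n - 1) := by
    rw [pow_sub₀ _ hpos.ne' (by omega : 1 ≤ 2 * n), pow_one]
  rw [hpow]

/-- The support and the coefficients of `P`, transported from finitely supported functions to
plain functions `Fin n → ℕ`, exhibit `u` as a function of type (★). -/
theorem isTypeStar_of_isTypeDiamond {n : ℕ} {P : MvPolynomial (Fin n) ℝ} (hP : IsTypeDiamond P) :
    IsTypeStar (fun x => Real.log (evalExp P x) - ∑ i, x i)
      (P.support.map Finsupp.equivFunOnFinite.toEmbedding)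
      (fun I => MvPolynomial.coeff (Finsupp.equivFunOnFinite.symm I) P) := by
  refine ⟨fun I hI => ?_, fun I hI => ?_, fun I hI => hP.1 _ (by simpa using hI), fun x => ?_⟩
  · refine Finset.mem_map.2 ⟨Finsupp.equivFunOnFinite.symm I, ?_, by simp⟩
    rw [MvPolynomial.mem_support_iff, hP.1 _ (by simpa using hI)]
    exact one_ne_zero
  · obtain ⟨d, hd, rfl⟩ := Finset.mem_map.1 hI
    simpa using hP.2 d hd
  · simp only [evalExp, MvPolynomial.eval_eq', Finset.sum_map, Equiv.coe_toEmbedding,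
      Equiv.symm_apply_apply, Finsupp.equivFunOnFinite_apply, Real.exp_sum, Real.exp_nat_mul]

/-- a polynomial `P` of type (◇) satisfies `det M_P = P^{2n−1}` on the open
positive orthant if and only if `u(x) = log P(e^{x₁},…,e^{xₙ}) − ∑ x_i` (a function of
type (★)) satisfies `det D²u = e^{−u}` on `ℝⁿ`. -/
theorem stmt12 {n : ℕ} (hn : 1 ≤ n) (P : MvPolynomial (Fin n) ℝ) (hP : IsTypeDiamond P)
    (u : (Fin n → ℝ) → ℝ)
    (hu : ∀ x, u x =
      Real.log (MvPolynomial.eval (fun i => Real.exp (x i)) P) - ∑ i, x i) :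
    (∃ (𝓘 : Finset (Fin n → ℕ)) (a : (Fin n → ℕ) → ℝ), IsTypeStar u 𝓘 a) ∧
    ((∀ x : Fin n → ℝ, (∀ i, 0 < x i) →
        MvPolynomial.eval x (MPmat P).det = (MvPolynomial.eval x P) ^ (2 * n - 1)) ↔
      SatisfiesMA u) := by
  obtain rfl : u = fun x => Real.log (evalExp P x) - ∑ i, x i := funext hu
  refine ⟨⟨_, _, isTypeStar_of_isTypeDiamond hP⟩, fun h x => ?_, fun h y hy => ?_⟩
  · exact (det_hessMat_eq_iff hn hP x).2 (h _ fun i => Real.exp_pos _)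
  · have hy' : (fun i => Real.exp (Real.log (y i))) = y := funext fun i => Real.exp_log (hy i)
    have := (det_hessMat_eq_iff hn hP fun i => Real.log (y i)).1 (h _)
    rwa [evalExp, hy'] at this
end
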